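/- arXiv:1711.08439 — 2 statements merged into one kernel-verified Lean document; each statement's English description precedes it below -/
import Mathlib

section
/- Let u ∈ H¹₀(Λ) be a nonzero weak eigenfunction of the Dirichlet Laplacian on the Fichera layer: −Δu = λu weakly in Λ with λ < λ₁(Γ). Then u is invariant under all permutations of the coordinates: u(x₁,x₂,x₃)=u(x_{σ(1)},x_{σ(2)},x_{σ(3)}) for every permutation σ of {1,2,3}; equivalently, u is even with respect to each of the three diagonal planes x_i=x_j (i<j) and satisfies the Neumann condition ∂_n u=0 on these planes. -/
/-!
Let `v = u - u ∘ S`, where `S` exchanges `x₁` and `x₂`. It solves the same equation and vanishes on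
the plane `x₁ = x₂`, so its restriction `w` to `U = Λ ∩ {x₂ < x₁}`, extended by zero, is again a
finite-energy Dirichlet solution. On `U` one has `min(x₁,x₂,x₃) = min(x₂,x₃)`, hence every slice of
`U` at fixed `x₁` is contained in the broken guide `Γ`. Bounding the two-dimensional Dirichlet
energy of each slice by `λ₁(Γ)` and integrating over `x₁` gives
`λ₁(Γ) ∫ w² ≤ ∫ |∇w|² = λ ∫ w²`, so `w = 0` because `λ < λ₁(Γ)` (`core`, `half_zero`). The
antisymmetry of `v` then gives `v = 0`, the swap of `x₂` and `x₃` follows by conjugation, and the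
two swaps generate all permutations.

Since `w` is only continuous up to the boundary, the inequality is proved for `χ φ(w)`, with `χ` a
cutoff at scale `n + 1` and `φ' = s` vanishing near `0` (`energy_step`). Such a function is `C¹` with
compact support in `U`, hence admissible in the definition of `λ₁(Γ)` on every slice. Testing the
equation with `χ² G(w)`, `G' = s²`, removes the quadratic gradient term from the energy, and what
remains converges to `λ ∫ w²` by dominated convergence.
-/

noncomputable section
open MeasureTheory Set Real

/-- The interval `I = (-1,0)`. -/
def II : Set ℝ := Set.Ioo (-1) 0

/-- The broken guide `Γ = {x ∈ ℝ² : -1 < min(x₁,x₂) < 0}`. -/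
def Gam : Set (ℝ × ℝ) := {p | -1 < min p.1 p.2 ∧ min p.1 p.2 < 0}

/-- The box `□_L = {x : max(|x₁+1|,|x₂+1|) < L}`. -/
def Box (L : ℝ) : Set (ℝ × ℝ) := {p | |p.1 + 1| < L ∧ |p.2 + 1| < L}

/-- The finite guide `Γ_R = Γ ∩ □_{R+1}`. -/
def GamR (R : ℝ) : Set (ℝ × ℝ) := Gam ∩ Box (R + 1)

/-- The Neumann part `Σ_R = ∂Γ_R ∩ ∂□_{R+1}` of the boundary. -/
def Sig (R : ℝ) : Set (ℝ × ℝ) := frontier (GamR R) ∩ frontier (Box (R + 1))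

/-- The Dirichlet part `∂Γ_R ∖ Σ_R` of the boundary. -/
def DirB (R : ℝ) : Set (ℝ × ℝ) := frontier (GamR R) \ Sig R

/-- Squared gradient `|∇u|² = (∂₁u)² + (∂₂u)²`. -/
def gradSq2 (u : ℝ × ℝ → ℝ) (p : ℝ × ℝ) : ℝ :=
  (fderiv ℝ u p (1, 0)) ^ 2 + (fderiv ℝ u p (0, 1)) ^ 2

/-- Admissible functions for the mixed problem on `Γ_R`: `C¹` up to the boundary
(modelled by a globally `C¹` extension) vanishing on the Dirichlet part. -/
def AdmR (R : ℝ) (u : ℝ × ℝ → ℝ) : Prop :=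
  ContDiff ℝ 1 u ∧ ∀ p ∈ DirB R, u p = 0

/-- First Rayleigh quotient `λ₁(Γ_R)` of the mixed Dirichlet–Neumann Laplacian on `Γ_R`. -/
def lamR (R : ℝ) : ℝ :=
  sInf {r | ∃ u : ℝ × ℝ → ℝ, AdmR R u ∧ (∫ p in GamR R, (u p) ^ 2) ≠ 0 ∧
    r = (∫ p in GamR R, gradSq2 u p) / ∫ p in GamR R, (u p) ^ 2}

/-- First Rayleigh quotient `λ₁(Γ)` of the Dirichlet Laplacian on the broken guide `Γ`. -/
def lamG : ℝ :=
  sInf {r | ∃ u : ℝ × ℝ → ℝ, ContDiff ℝ 1 u ∧ HasCompactSupport u ∧ tsupport u ⊆ Gam ∧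
    (∫ p in Gam, (u p) ^ 2) ≠ 0 ∧
    r = (∫ p in Gam, gradSq2 u p) / ∫ p in Gam, (u p) ^ 2}

/-- `ω = √(π² − λ₁(Γ))`. -/
def omega : ℝ := Real.sqrt (π ^ 2 - lamG)

/-- The Fichera layer `Λ = {x ∈ ℝ³ : -1 < min(x₁,x₂,x₃) < 0}`. -/
def Lam3 : Set (ℝ × ℝ × ℝ) :=
  {x | -1 < min x.1 (min x.2.1 x.2.2) ∧ min x.1 (min x.2.1 x.2.2) < 0}

/-- The residual domain `Ω_R³ = {x : x₃ > R and (x₁,x₂) ∈ Γ_{x₃}}`. -/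
def Om3 (R : ℝ) : Set (ℝ × ℝ × ℝ) := {x | R < x.2.2 ∧ (x.1, x.2.1) ∈ GamR x.2.2}

/-- Squared gradient in 3D: `|∇u|² = (∂₁u)² + (∂₂u)² + (∂₃u)²`. -/
def gradSq3 (u : ℝ × ℝ × ℝ → ℝ) (x : ℝ × ℝ × ℝ) : ℝ :=
  (fderiv ℝ u x (1, 0, 0)) ^ 2 + (fderiv ℝ u x (0, 1, 0)) ^ 2 + (fderiv ℝ u x (0, 0, 1)) ^ 2

/-- Partial derivative in direction `e` in 3D. -/
def pd3 (e : ℝ × ℝ × ℝ) (u : ℝ × ℝ × ℝ → ℝ) : ℝ × ℝ × ℝ → ℝ := fun x => fderiv ℝ u x e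

/-- Laplacian in 3D. -/
def lap3 (u : ℝ × ℝ × ℝ → ℝ) (x : ℝ × ℝ × ℝ) : ℝ :=
  pd3 (1,0,0) (pd3 (1,0,0) u) x + pd3 (0,1,0) (pd3 (0,1,0) u) x +
    pd3 (0,0,1) (pd3 (0,0,1) u) x

/-- Eigenfunction of the Dirichlet Laplacian on the Fichera layer `Λ` with eigenvalue
`lam`: a nonzero function in `H¹₀(Λ) ∩ L²`, extended by `0` outside `Λ`, classical
solution of `-Δu = λ u` in `Λ`. -/
def IsEigenLam (lam : ℝ) (u : ℝ × ℝ × ℝ → ℝ) : Prop :=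
  Continuous u ∧ (∀ x ∉ Lam3, u x = 0) ∧ ContDiffOn ℝ 2 u Lam3 ∧
  IntegrableOn (fun x => (u x) ^ 2) Lam3 ∧ IntegrableOn (fun x => gradSq3 u x) Lam3 ∧
  (∀ x ∈ Lam3, -(lap3 u x) = lam * u x) ∧ (∃ x, u x ≠ 0)

/-- Coordinates of a point of `ℝ³` as a function on `Fin 3`. -/
def coord3 (x : ℝ × ℝ × ℝ) : Fin 3 → ℝ := ![x.1, x.2.1, x.2.2]

/-! ### Truncations and cutoffs -/

lemma exists_cut (ε : ℝ) (hε : 0 < ε) : ∃ s : ℝ → ℝ, Continuous s ∧ (∀ t, 0 ≤ s t) ∧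
    (∀ t, s t ≤ 1) ∧ (∀ t, |t| ≤ ε → s t = 0) ∧ (∀ t, 2 * ε ≤ |t| → s t = 1) := by
  refine ⟨fun t => max 0 (min 1 (|t| / ε - 1)), by fun_prop, fun t => le_max_left _ _,
    fun t => max_le zero_le_one (min_le_left _ _), fun t ht => ?_, fun t ht => ?_⟩
  · have : |t| / ε ≤ 1 := by rwa [div_le_one hε]
    exact max_eq_left ((min_le_right _ _).trans (by linarith))
  · have : 2 ≤ |t| / ε := by rwa [le_div_iff₀ hε]
    show max 0 (min 1 (|t| / ε - 1)) = 1
    rw [min_eq_left (by linarith), max_eq_right zero_le_one]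

/-- The primitive of `s` vanishing at `0`. -/
def prim (s : ℝ → ℝ) (t : ℝ) : ℝ := ∫ r in (0 : ℝ)..t, s r

lemma prim_hasDerivAt {s : ℝ → ℝ} (hs : Continuous s) (t : ℝ) : HasDerivAt (prim s) (s t) t :=
  intervalIntegral.integral_hasDerivAt_right (hs.intervalIntegrable _ _)
    (hs.stronglyMeasurableAtFilter _ _) hs.continuousAt

lemma prim_contDiff {s : ℝ → ℝ} (hs : Continuous s) : ContDiff ℝ 1 (prim s) := by
  rw [contDiff_one_iff_deriv]
  refine ⟨fun t => (prim_hasDerivAt hs t).differentiableAt, ?_⟩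
  have : deriv (prim s) = s := funext fun t => (prim_hasDerivAt hs t).deriv
  rwa [this]

lemma prim_abs_le {s : ℝ → ℝ} (h0 : ∀ t, 0 ≤ s t) (h1 : ∀ t, s t ≤ 1) (t : ℝ) :
    |prim s t| ≤ |t| := by
  have := intervalIntegral.norm_integral_le_of_norm_le_const (a := 0) (b := t) (f := s) (C := 1)
    (fun x _ => by rw [Real.norm_eq_abs, abs_of_nonneg (h0 x)]; exact h1 x)
  simpa [prim] using this

lemma prim_eq_zero {s : ℝ → ℝ} {ε : ℝ} (h : ∀ t, |t| ≤ ε → s t = 0) {t : ℝ} (ht : |t| ≤ ε) :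
    prim s t = 0 := by
  have : ∀ r ∈ Set.uIcc 0 t, s r = 0 := fun r hr => h r (by
    have := abs_sub_left_of_mem_uIcc hr
    simp only [sub_zero] at this
    exact this.trans ht)
  rw [prim, intervalIntegral.integral_congr (g := fun _ => 0) this]
  simp

lemma prim_tendsto {s : ℕ → ℝ → ℝ} {ε : ℕ → ℝ} (hs : ∀ n, Continuous (s n))
    (h0 : ∀ n t, 0 ≤ s n t) (h1 : ∀ n t, s n t ≤ 1) (h2 : ∀ n t, 2 * ε n ≤ |t| → s n t = 1)
    (hε : Filter.Tendsto ε Filter.atTop (nhds 0)) (t : ℝ) :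
    Filter.Tendsto (fun n => prim (s n) t) Filter.atTop (nhds t) := by
  have : Filter.Tendsto (fun n => prim (s n) t) Filter.atTop (nhds (∫ r in (0 : ℝ)..t, (1 : ℝ))) := by
    apply intervalIntegral.tendsto_integral_filter_of_dominated_convergence (fun _ => 1)
    · exact Filter.Eventually.of_forall fun n => (hs n).aestronglyMeasurable
    · exact Filter.Eventually.of_forall fun n => Filter.Eventually.of_forall fun x _ => by
        rw [Real.norm_eq_abs, abs_of_nonneg (h0 n x)]; exact h1 n x
    · simp
    · have : ∀ᵐ x : ℝ, x ≠ 0 := by simp [ae_iff]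
      filter_upwards [this] with x hx _
      apply tendsto_const_nhds.congr'
      have h3 : Filter.Tendsto (fun n => 2 * ε n) Filter.atTop (nhds 0) := by
        simpa using hε.const_mul 2
      filter_upwards [h3.eventually_lt_const (abs_pos.2 hx)] with n hn
      exact (h2 n x hn.le).symm
  simpa using this

/-- Cutoffs at scale `n + 1`, with gradient of order `1/(n + 1)`. -/
lemma exists_cutoff : ∃ (C : ℝ) (χ : ℕ → ℝ × ℝ × ℝ → ℝ), (∀ n, ContDiff ℝ 1 (χ n)) ∧
    (∀ n, HasCompactSupport (χ n)) ∧ (∀ n x, 0 ≤ χ n x) ∧ (∀ n x, χ n x ≤ 1) ∧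
    (∀ x, Filter.Tendsto (fun n => χ n x) Filter.atTop (nhds 1)) ∧
    ∀ n x e, ‖e‖ ≤ 1 → |fderiv ℝ (χ n) x e| ≤ C / (n + 1) := by
  let b : ContDiffBump (0 : ℝ × ℝ × ℝ) := ⟨1, 2, one_pos, one_lt_two⟩
  have hb : ContDiff ℝ 1 b := b.contDiff
  obtain ⟨C, hC⟩ := (b.hasCompactSupport.fderiv (𝕜 := ℝ)).exists_bound_of_continuous
    (hb.continuous_fderiv one_ne_zero)
  have hn0 : ∀ n : ℕ, ((n : ℝ) + 1)⁻¹ ≠ 0 := fun n => by positivity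
  refine ⟨C, fun n x => b (((n : ℝ) + 1)⁻¹ • x), fun n => hb.comp (contDiff_const_smul _), fun n => ?_,
    fun n x => b.nonneg, fun n x => b.le_one, fun x => ?_, fun n x e he => ?_⟩
  · exact b.hasCompactSupport.comp_smul (hn0 n)
  · have h1 : Filter.Tendsto (fun n : ℕ => b (((n : ℝ) + 1)⁻¹ • x)) Filter.atTop
        (nhds (b ((0 : ℝ) • x))) := by
      have h2 : Filter.Tendsto (fun n : ℕ => ((n : ℝ) + 1)⁻¹) Filter.atTop (nhds 0) := by
        simpa using tendsto_one_div_add_atTop_nhds_zero_nat (𝕜 := ℝ)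
      exact (hb.continuous.tendsto _).comp (h2.smul_const x)
    have h3 : b ((0 : ℝ) • x) = 1 := by
      rw [zero_smul]; exact b.one_of_mem_closedBall (by simp [b])
    rwa [h3] at h1
  · rw [fderiv_comp_smul]
    simp only [smul_apply, smul_eq_mul, abs_mul]
    have h4 := (fderiv ℝ b (((n : ℝ) + 1)⁻¹ • x)).le_of_opNorm_le (hC _) e
    rw [Real.norm_eq_abs] at h4
    have hC0 : 0 ≤ C := (norm_nonneg _).trans (hC 0)
    rw [abs_of_pos (by positivity), div_eq_inv_mul]
    gcongr
    nlinarith [norm_nonneg e]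

/-! ### The Rayleigh bound on slices -/

lemma Gam_slice (g : ℝ × ℝ → ℝ) (hg : ContDiff ℝ 1 g) (hc : HasCompactSupport g)
    (hs : tsupport g ⊆ Gam) : lamG * ∫ p, g p ^ 2 ≤ ∫ p, gradSq2 g p := by
  have e1 : ∫ p in Gam, g p ^ 2 = ∫ p, g p ^ 2 := by
    apply setIntegral_eq_integral_of_forall_compl_eq_zero
    intro x hx
    have : g x = 0 := image_eq_zero_of_notMem_tsupport fun h => hx (hs h)
    simp [this]
  have e2 : ∫ p in Gam, gradSq2 g p = ∫ p, gradSq2 g p := by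
    apply setIntegral_eq_integral_of_forall_compl_eq_zero
    intro x hx
    have : fderiv ℝ g x = 0 := by
      have := fun h => hx (hs (support_fderiv_subset ℝ (f := g) h))
      simpa using this
    simp [gradSq2, this]
  have p2 : 0 ≤ ∫ p, gradSq2 g p := integral_nonneg fun p => by
    simp only [gradSq2, Pi.zero_apply]; positivity
  have p1 : 0 ≤ ∫ p, g p ^ 2 := integral_nonneg fun p => sq_nonneg _
  by_cases h : ∫ p, g p ^ 2 = 0
  · simpa [h] using p2
  · have hle : lamG ≤ (∫ p in Gam, gradSq2 g p) / ∫ p in Gam, g p ^ 2 := by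
      apply csInf_le
      · refine ⟨0, ?_⟩
        rintro r ⟨u, -, -, -, -, rfl⟩
        apply div_nonneg <;> apply integral_nonneg <;> intro p
        · simp only [gradSq2, Pi.zero_apply]; positivity
        · exact sq_nonneg _
      · exact ⟨g, hg, hc, hs, by rwa [e1], rfl⟩
    rw [e1, e2] at hle
    exact (le_div_iff₀ (lt_of_le_of_ne p1 (Ne.symm h))).1 hle

/-- Fubini over `x₁`: the `x₁`-derivative is dropped and `Gam_slice` is applied to every slice. -/
lemma layer_slice (f : ℝ × ℝ × ℝ → ℝ) (hf : ContDiff ℝ 1 f) (hc : HasCompactSupport f)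
    (hs : ∀ x ∈ tsupport f, x.2 ∈ Gam) : lamG * ∫ x, f x ^ 2 ≤ ∫ x, gradSq3 f x := by
  have hfd := hf.continuous_fderiv one_ne_zero
  have hcd : ∀ e, HasCompactSupport (fun x => fderiv ℝ f x e ^ 2) := fun e =>
    (hc.fderiv (𝕜 := ℝ)).comp_left (g := fun L : (ℝ × ℝ × ℝ) →L[ℝ] ℝ => L e ^ 2) (by simp)
  have hid : ∀ e, Integrable (fun x => fderiv ℝ f x e ^ 2) := fun e =>
    Continuous.integrable_of_hasCompactSupport (by fun_prop) (hcd e)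
  have i1 : Integrable (fun x => f x ^ 2) :=
    Continuous.integrable_of_hasCompactSupport (hf.continuous.pow 2)
      (hc.comp_left (g := fun t : ℝ => t ^ 2) (by simp))
  have i3 : Integrable (fun x => fderiv ℝ f x (0, 1, 0) ^ 2 + fderiv ℝ f x (0, 0, 1) ^ 2) :=
    (hid _).add (hid _)
  have i2 : Integrable (fun x => gradSq3 f x) := ((hid _).add (hid _)).add (hid _)
  refine le_trans ?_ (integral_mono i3 i2 fun x => ?_)
  · rw [Measure.volume_eq_prod] at i1 i3 ⊢
    rw [integral_prod _ i1, integral_prod _ i3, ← integral_const_mul]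
    apply integral_mono (i1.integral_prod_left.const_mul _) i3.integral_prod_left
    intro a
    have hin : ContDiff ℝ 1 (fun p : ℝ × ℝ => f (a, p)) := hf.comp (by fun_prop)
    have hsub : tsupport (fun p : ℝ × ℝ => f (a, p)) ⊆ (fun p => (a, p)) ⁻¹' tsupport f :=
      tsupport_comp_subset_preimage f (f := fun p : ℝ × ℝ => (a, p)) (by fun_prop)
    have hcg : HasCompactSupport (fun p : ℝ × ℝ => f (a, p)) := by
      apply IsCompact.of_isClosed_subset (hc.isCompact.image continuous_snd) (isClosed_tsupport _)
      intro p hp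
      exact ⟨(a, p), hsub hp, rfl⟩
    refine (Gam_slice _ hin hcg fun p hp => hs _ (hsub hp)).trans_eq ?_
    apply integral_congr_ae
    refine Filter.Eventually.of_forall fun p => ?_
    have hd : HasFDerivAt (fun p : ℝ × ℝ => f (a, p))
        ((fderiv ℝ f (a, p)).comp (ContinuousLinearMap.inr ℝ ℝ (ℝ × ℝ))) p :=
      ((hf.differentiable one_ne_zero) (a, p)).hasFDerivAt.comp p (hasFDerivAt_prodMk_right a p)
    simp [gradSq2, hd.fderiv]
  · simp only [gradSq3]
    nlinarith [sq_nonneg (fderiv ℝ f x (1, 0, 0))]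

lemma integral_pd_zero (F : ℝ × ℝ × ℝ → ℝ) (hF : ContDiff ℝ 1 F) (hc : HasCompactSupport F)
    (e : ℝ × ℝ × ℝ) : Integrable (fun x => fderiv ℝ F x e) ∧ ∫ x, fderiv ℝ F x e = 0 := by
  have hfd := hF.continuous_fderiv one_ne_zero
  have hi : Integrable (fun x => fderiv ℝ F x e) :=
    Continuous.integrable_of_hasCompactSupport (by fun_prop)
      ((hc.fderiv (𝕜 := ℝ)).comp_left (g := fun L : (ℝ × ℝ × ℝ) →L[ℝ] ℝ => L e) (by simp))
  refine ⟨hi, ?_⟩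
  have : (volume : Measure (ℝ × ℝ × ℝ)).IsAddHaarMeasure :=
    inferInstanceAs ((volume : Measure ℝ).prod (volume : Measure (ℝ × ℝ))).IsAddHaarMeasure
  have := integral_mul_fderiv_eq_neg_fderiv_mul_of_integrable (μ := volume) (f := fun _ => (1 : ℝ)) (g := F) (v := e)
    (by simp) (by simpa using hi) (by simpa using hF.continuous.integrable_of_hasCompactSupport hc)
    (fun x _ => by fun_prop) (fun x _ => hF.differentiable one_ne_zero x)
  simpa using this

/-! ### Elementary estimates -/

lemma integral_sub_three {μ : Measure (ℝ × ℝ × ℝ)} {a b c d : ℝ × ℝ × ℝ → ℝ} (ha : Integrable a μ)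
    (hb : Integrable b μ ∧ ∫ x, b x ∂μ = 0) (hc : Integrable c μ ∧ ∫ x, c x ∂μ = 0)
    (hd : Integrable d μ ∧ ∫ x, d x ∂μ = 0) :
    ∫ x, (a x - b x - c x - d x) ∂μ = ∫ x, a x ∂μ := by
  have h1 : Integrable (fun x => a x - b x) μ := ha.sub hb.1
  have h2 : Integrable (fun x => a x - b x - c x) μ := h1.sub hc.1
  rw [integral_sub h2 hd.1, integral_sub h1 hc.1, integral_sub ha hb.1, hb.2, hc.2, hd.2]
  ring

lemma cross_bound {χ s φ G w : ℝ} (hχ0 : 0 ≤ χ) (hχ1 : χ ≤ 1) (hs0 : 0 ≤ s) (hs1 : s ≤ 1)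
    (hφ : |φ| ≤ |w|) (hG : |G| ≤ |w|) : |2 * χ * (s * φ - G)| ≤ 4 * |w| := by
  have h1 : |s * φ - G| ≤ 2 * |w| := by
    refine (abs_sub _ _).trans ?_
    rw [abs_mul, abs_of_nonneg hs0]
    nlinarith [abs_nonneg φ]
  rw [abs_mul, abs_of_nonneg (by positivity)]
  nlinarith [abs_nonneg (s * φ - G)]

/-- The bound, uniform in the truncation and the cutoff, that dominates `rhsH` below. -/
lemma rhs_bound {lam χ s φ G w C c₁ c₂ c₃ a₁ a₂ a₃ : ℝ} (hχ0 : 0 ≤ χ) (hχ1 : χ ≤ 1) (hs0 : 0 ≤ s)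
    (hs1 : s ≤ 1) (hφ : |φ| ≤ |w|) (hG : |G| ≤ |w|) (hC : 0 ≤ C) (h1 : |c₁| ≤ C) (h2 : |c₂| ≤ C)
    (h3 : |c₃| ≤ C) :
    |lam * (χ ^ 2 * G * w) + 2 * χ * (s * φ - G) * (c₁ * a₁ + c₂ * a₂ + c₃ * a₃) +
      φ ^ 2 * (c₁ ^ 2 + c₂ ^ 2 + c₃ ^ 2)| ≤
    (|lam| + 6 * C + 3 * C ^ 2) * w ^ 2 + 2 * C * (a₁ ^ 2 + a₂ ^ 2 + a₃ ^ 2) := by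
  have t1 : |lam * (χ ^ 2 * G * w)| ≤ |lam| * w ^ 2 := by
    rw [abs_mul]
    gcongr
    rw [abs_mul, abs_mul, abs_of_nonneg (sq_nonneg χ), ← sq_abs w, sq |w|]
    have : χ ^ 2 * |G| ≤ 1 * |w| := by
      gcongr
      exact pow_le_one₀ hχ0 hχ1
    rw [one_mul] at this
    gcongr
  have ta : ∀ c a : ℝ, |c| ≤ C → 4 * |w| * |c * a| ≤ 2 * C * w ^ 2 + 2 * C * a ^ 2 := by
    intro c a hc
    have : 4 * |w| * |c * a| ≤ 4 * |w| * (C * |a|) := by rw [abs_mul]; gcongr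
    nlinarith [mul_nonneg hC (sq_nonneg (|w| - |a|)), sq_abs w, sq_abs a]
  have t2 : |2 * χ * (s * φ - G) * (c₁ * a₁ + c₂ * a₂ + c₃ * a₃)| ≤
      6 * C * w ^ 2 + 2 * C * (a₁ ^ 2 + a₂ ^ 2 + a₃ ^ 2) := by
    rw [abs_mul]
    have : |c₁ * a₁ + c₂ * a₂ + c₃ * a₃| ≤ |c₁ * a₁| + |c₂ * a₂| + |c₃ * a₃| :=
      abs_add_three _ _ _
    have := mul_le_mul (cross_bound hχ0 hχ1 hs0 hs1 hφ hG) this (abs_nonneg _) (by positivity)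
    nlinarith [ta c₁ a₁ h1, ta c₂ a₂ h2, ta c₃ a₃ h3]
  have t3 : |φ ^ 2 * (c₁ ^ 2 + c₂ ^ 2 + c₃ ^ 2)| ≤ 3 * C ^ 2 * w ^ 2 := by
    rw [abs_of_nonneg (by positivity)]
    have hw : φ ^ 2 ≤ w ^ 2 := sq_le_sq.2 hφ
    have q1 : c₁ ^ 2 ≤ C ^ 2 := sq_le_sq.2 (by rwa [abs_of_nonneg hC])
    have q2 : c₂ ^ 2 ≤ C ^ 2 := sq_le_sq.2 (by rwa [abs_of_nonneg hC])
    have q3 : c₃ ^ 2 ≤ C ^ 2 := sq_le_sq.2 (by rwa [abs_of_nonneg hC])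
    calc φ ^ 2 * (c₁ ^ 2 + c₂ ^ 2 + c₃ ^ 2) ≤ w ^ 2 * (C ^ 2 + C ^ 2 + C ^ 2) := by gcongr
      _ = _ := by ring
  refine (abs_add_three _ _ _).trans ?_
  linarith

/-! ### The energy inequality for truncations -/

section Core

variable {U : Set (ℝ × ℝ × ℝ)} {w : ℝ × ℝ × ℝ → ℝ}

/-- Truncation below `ε` makes functions of `w` vanish in a neighbourhood of every point
outside `U`, the boundary of `U` included. -/
lemma comp_eventually_zero (hw : Continuous w) (hw0 : ∀ x ∉ U, w x = 0) {ε : ℝ} (hε : 0 < ε)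
    {φ : ℝ → ℝ} (hφ : ∀ t, |t| ≤ ε → φ t = 0) {x : ℝ × ℝ × ℝ} (hx : x ∉ U) :
    ∀ᶠ y in nhds x, φ (w y) = 0 := by
  have h1 : Filter.Tendsto (fun y => |w y|) (nhds x) (nhds 0) := by
    have := (hw.abs).tendsto x
    simpa [hw0 x hx] using this
  filter_upwards [h1.eventually_lt_const hε] with y hy using hφ _ hy.le

lemma tsupport_comp_subset' (hw : Continuous w) (hw0 : ∀ x ∉ U, w x = 0) {ε : ℝ} (hε : 0 < ε)
    {φ : ℝ → ℝ} (hφ : ∀ t, |t| ≤ ε → φ t = 0) (χ : ℝ × ℝ × ℝ → ℝ) :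
    tsupport (fun x => χ x * φ (w x)) ⊆ U := by
  intro x hx
  by_contra hxU
  rw [← not_not (a := x ∈ tsupport _), notMem_tsupport_iff_eventuallyEq] at hx
  apply hx
  filter_upwards [comp_eventually_zero hw hw0 hε hφ hxU] with y hy
  simp [hy]

/-- The density left over from `|∇(χ φ(w))|²` after subtracting the divergence of `χ² G(w) ∇w`,
for a solution of `-Δw = lam w` and primitives `φ` of `s`, `G` of `s²`:
`lam χ² G(w) w + 2 χ (s(w) φ(w) - G(w)) ∇χ·∇w + φ(w)² |∇χ|²`. It contains no term quadratic
in `∇w`, and every term other than the first carries a factor `∇χ`. -/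
def rhsH (lam : ℝ) (χ w : ℝ × ℝ × ℝ → ℝ) (s φ G : ℝ → ℝ) (x : ℝ × ℝ × ℝ) : ℝ :=
  lam * (χ x ^ 2 * G (w x) * w x) +
  2 * χ x * (s (w x) * φ (w x) - G (w x)) *
    (fderiv ℝ χ x (1,0,0) * fderiv ℝ w x (1,0,0) + fderiv ℝ χ x (0,1,0) * fderiv ℝ w x (0,1,0) +
      fderiv ℝ χ x (0,0,1) * fderiv ℝ w x (0,0,1)) + φ (w x) ^ 2 * gradSq3 χ x

/-- The two-dimensional Rayleigh bound applied to the slices of the test function `χ φ(w)`, in which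
the energy is rewritten by testing the equation with `χ² G(w)`. -/
lemma energy_step (hU : IsOpen U) (hw : Continuous w) (hw0 : ∀ x ∉ U, w x = 0)
    (hC : ContDiffOn ℝ 2 w U) {lam : ℝ} (heq : ∀ x ∈ U, -(lap3 w x) = lam * w x)
    (hG : ∀ x ∈ U, x.2 ∈ Gam) {ε : ℝ} (hε : 0 < ε) {s : ℝ → ℝ} (hs : Continuous s)
    (hsε : ∀ t, |t| ≤ ε → s t = 0) {χ : ℝ × ℝ × ℝ → ℝ} (hχ : ContDiff ℝ 1 χ)
    (hχc : HasCompactSupport χ) :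
    lamG * ∫ x in U, (χ x * prim s (w x)) ^ 2 ≤
      ∫ x in U, rhsH lam χ w s (prim s) (prim fun t => s t ^ 2) x := by
  have hs2 : Continuous fun t => s t ^ 2 := hs.pow 2
  have hsε2 : ∀ t, |t| ≤ ε → s t ^ 2 = 0 := fun t ht => by simp [hsε t ht]
  set φ := prim s with hφdef
  set G := prim (fun t => s t ^ 2) with hGdef
  have hφ0 : ∀ t, |t| ≤ ε → φ t = 0 := fun t ht => prim_eq_zero hsε ht
  have hG0 : ∀ t, |t| ≤ ε → G t = 0 := fun t ht => prim_eq_zero hsε2 ht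
  have hCat : ∀ x ∈ U, ContDiffAt ℝ 2 w x := fun x hx => hC.contDiffAt (hU.mem_nhds hx)
  have hC1 : ∀ x ∈ U, ContDiffAt ℝ 1 w x := fun x hx => (hCat x hx).of_le (by norm_num)
  have hdw : ∀ x ∈ U, HasFDerivAt w (fderiv ℝ w x) x := fun x hx =>
    ((hC1 x hx).differentiableAt one_ne_zero).hasFDerivAt
  have hpd : ∀ x ∈ U, ∀ e, ContDiffAt ℝ 1 (pd3 e w) x := fun x hx e =>
    ((hCat x hx).fderiv_right (m := 1) (by norm_num)).clm_apply contDiffAt_const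
  have hdχ : ∀ x, HasFDerivAt χ (fderiv ℝ χ x) x := fun x =>
    (hχ.differentiable one_ne_zero x).hasFDerivAt
  have hf : ContDiff ℝ 1 (fun x => χ x * φ (w x)) := by
    rw [contDiff_iff_contDiffAt]
    intro x
    by_cases hx : x ∈ U
    · exact hχ.contDiffAt.mul ((prim_contDiff hs).contDiffAt.comp x (hC1 x hx))
    · apply (contDiffAt_const (c := (0 : ℝ))).congr_of_eventuallyEq
      filter_upwards [comp_eventually_zero hw hw0 hε hφ0 hx] with y hy
      simp [hy]
  have hfc : HasCompactSupport (fun x => χ x * φ (w x)) := hχc.mul_right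
  have hF : ∀ e, ContDiff ℝ 1 (fun x => χ x ^ 2 * G (w x) * pd3 e w x) := by
    intro e
    rw [contDiff_iff_contDiffAt]
    intro x
    by_cases hx : x ∈ U
    · exact ((hχ.contDiffAt.pow 2).mul ((prim_contDiff hs2).contDiffAt.comp x (hC1 x hx))).mul
        (hpd x hx e)
    · apply (contDiffAt_const (c := (0 : ℝ))).congr_of_eventuallyEq
      filter_upwards [comp_eventually_zero hw hw0 hε hG0 hx] with y hy
      simp [hy]
  have hFc : ∀ e, HasCompactSupport (fun x => χ x ^ 2 * G (w x) * pd3 e w x) := fun e =>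
    ((hχc.comp_left (g := fun t : ℝ => t ^ 2) (by simp)).mul_right (f' := fun x => G (w x))).mul_right
  have hfd : ∀ x ∈ U, ∀ e, fderiv ℝ (fun x => χ x * φ (w x)) x e =
      χ x * (s (w x) * fderiv ℝ w x e) + φ (w x) * fderiv ℝ χ x e := by
    intro x hx e
    have h1 := (hdχ x).mul ((prim_hasDerivAt hs (w x)).comp_hasFDerivAt x (hdw x hx))
    have h2 := h1.fderiv
    simp only [Function.comp_def, ← hφdef, Pi.mul_def] at h2
    rw [h2]
    simp
  have hFd : ∀ x ∈ U, ∀ e, fderiv ℝ (fun x => χ x ^ 2 * G (w x) * pd3 e w x) x e =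
      2 * χ x * fderiv ℝ χ x e * G (w x) * fderiv ℝ w x e +
      χ x ^ 2 * s (w x) ^ 2 * fderiv ℝ w x e ^ 2 + χ x ^ 2 * G (w x) * pd3 e (pd3 e w) x := by
    intro x hx e
    have h1 := (((hdχ x).pow 2).mul
      ((prim_hasDerivAt hs2 (w x)).comp_hasFDerivAt x (hdw x hx))).mul
      ((hpd x hx e).differentiableAt one_ne_zero).hasFDerivAt
    have h2 := h1.fderiv
    simp only [Function.comp_def, ← hGdef, Pi.mul_def] at h2
    rw [h2]
    simp [pd3]
    ring
  have key := layer_slice _ hf hfc fun x hx =>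
    hG x (tsupport_comp_subset' hw hw0 hε hφ0 χ hx)
  have e1 : ∫ x in U, (χ x * φ (w x)) ^ 2 = ∫ x, (χ x * φ (w x)) ^ 2 := by
    apply setIntegral_eq_integral_of_forall_compl_eq_zero
    intro x hx
    simp [hw0 x hx, hφ0 0 (by simpa using hε.le)]
  -- All integrands vanish off `U`, where `w` is below the threshold `ε` near every point; this
  -- matters because `fderiv ℝ w` carries no information on the boundary of `U`.
  have hdiv0 : ∀ e, ∀ x ∉ U, fderiv ℝ (fun x => χ x ^ 2 * G (w x) * pd3 e w x) x e = 0 := by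
    intro e x hx
    have : (fun x => χ x ^ 2 * G (w x) * pd3 e w x) =ᶠ[nhds x] fun _ => 0 := by
      filter_upwards [comp_eventually_zero hw hw0 hε hG0 hx] with y hy
      simp [hy]
    rw [this.fderiv_eq]; simp
  have hgrad0 : ∀ x ∉ U, gradSq3 (fun x => χ x * φ (w x)) x = 0 := by
    intro x hx
    have : (fun x => χ x * φ (w x)) =ᶠ[nhds x] fun _ => 0 := by
      filter_upwards [comp_eventually_zero hw hw0 hε hφ0 hx] with y hy
      simp [hy]
    rw [gradSq3, this.fderiv_eq]; simp
  have e2 : ∫ x in U, gradSq3 (fun x => χ x * φ (w x)) x =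
      ∫ x, gradSq3 (fun x => χ x * φ (w x)) x :=
    setIntegral_eq_integral_of_forall_compl_eq_zero hgrad0
  have e3 : ∀ e, IntegrableOn (fun x => fderiv ℝ (fun x => χ x ^ 2 * G (w x) * pd3 e w x) x e) U ∧
      ∫ x in U, fderiv ℝ (fun x => χ x ^ 2 * G (w x) * pd3 e w x) x e = 0 := by
    intro e
    obtain ⟨h1, h2⟩ := integral_pd_zero _ (hF e) (hFc e) e
    refine ⟨h1.integrableOn, ?_⟩
    rw [← h2]
    exact setIntegral_eq_integral_of_forall_compl_eq_zero (hdiv0 e)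
  have hgi : IntegrableOn (gradSq3 (fun x => χ x * φ (w x))) U := by
    have hfd := hf.continuous_fderiv one_ne_zero
    have hid : ∀ e, Integrable (fun x => fderiv ℝ (fun x => χ x * φ (w x)) x e ^ 2) := fun e =>
      Continuous.integrable_of_hasCompactSupport (by fun_prop)
        ((hfc.fderiv (𝕜 := ℝ)).comp_left (g := fun L : (ℝ × ℝ × ℝ) →L[ℝ] ℝ => L e ^ 2) (by simp))
    exact (((hid _).add (hid _)).add (hid _)).integrableOn
  rw [e1]
  refine key.trans_eq ?_
  rw [← e2]
  have e4 : ∫ x in U, (gradSq3 (fun x => χ x * φ (w x)) x -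
      fderiv ℝ (fun x => χ x ^ 2 * G (w x) * pd3 (1,0,0) w x) x (1,0,0) -
      fderiv ℝ (fun x => χ x ^ 2 * G (w x) * pd3 (0,1,0) w x) x (0,1,0) -
      fderiv ℝ (fun x => χ x ^ 2 * G (w x) * pd3 (0,0,1) w x) x (0,0,1)) =
      ∫ x in U, gradSq3 (fun x => χ x * φ (w x)) x :=
    integral_sub_three hgi (e3 _) (e3 _) (e3 _)
  -- Subtracting the divergence of the field removes the term `χ² s(w)² |∇w|²` from the energy.
  rw [← e4]
  apply setIntegral_congr_fun hU.measurableSet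
  intro x hx
  have hl := heq x hx
  rw [lap3] at hl
  simp only [gradSq3, rhsH, hfd x hx, hFd x hx]
  linear_combination (χ x ^ 2 * G (w x)) * hl

/-- A Dirichlet solution of `-Δw = lam w` with finite energy on an open set whose slices
`x₁ = const` lie in `Γ` vanishes when `lam < λ₁(Γ)`. The truncation level `1/(n+1)` and the cutoff
scale `n+1` go to their limits simultaneously, by dominated convergence in `energy_step`. -/
lemma core (hU : IsOpen U) (hw : Continuous w) (hw0 : ∀ x ∉ U, w x = 0)
    (hC : ContDiffOn ℝ 2 w U) (hi : IntegrableOn (fun x => w x ^ 2) U)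
    (hgi : IntegrableOn (fun x => gradSq3 w x) U)
    {lam : ℝ} (hlam : lam < lamG) (heq : ∀ x ∈ U, -(lap3 w x) = lam * w x)
    (hG : ∀ x ∈ U, x.2 ∈ Gam) (x : ℝ × ℝ × ℝ) : w x = 0 := by
  obtain ⟨C, χ, hχ, hχc, hχ0, hχ1, hχt, hχd⟩ := exists_cutoff
  have hε : ∀ n : ℕ, 0 < 1 / ((n : ℝ) + 1) := fun n => by positivity
  have hεt := tendsto_one_div_add_atTop_nhds_zero_nat (𝕜 := ℝ)
  choose s hsc hs0 hs1 hsz hso using fun n => exists_cut _ (hε n)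
  have hs2 : ∀ n, Continuous fun t => s n t ^ 2 := fun n => (hsc n).pow 2
  have hs20 : ∀ n t, 0 ≤ s n t ^ 2 := fun n t => sq_nonneg _
  have hs21 : ∀ n t, s n t ^ 2 ≤ 1 := fun n t => pow_le_one₀ (hs0 n t) (hs1 n t)
  have hφb : ∀ n t, |prim (s n) t| ≤ |t| := fun n => prim_abs_le (hs0 n) (hs1 n)
  have hGb : ∀ n t, |prim (fun t => s n t ^ 2) t| ≤ |t| := fun n => prim_abs_le (hs20 n) (hs21 n)
  have hφt : ∀ t, Filter.Tendsto (fun n => prim (s n) t) Filter.atTop (nhds t) :=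
    prim_tendsto hsc hs0 hs1 hso hεt
  have hGt : ∀ t, Filter.Tendsto (fun n => prim (fun t => s n t ^ 2) t) Filter.atTop (nhds t) :=
    prim_tendsto hs2 hs20 hs21 (fun n t ht => by simp [hso n t ht]) hεt
  have hφc : ∀ n, Continuous (prim (s n)) := fun n => (prim_contDiff (hsc n)).continuous
  have hGc : ∀ n, Continuous (prim fun t => s n t ^ 2) := fun n => (prim_contDiff (hs2 n)).continuous
  have n1 : ‖((1 : ℝ), (0 : ℝ), (0 : ℝ))‖ ≤ 1 := by simp [Prod.norm_def]
  have n2 : ‖((0 : ℝ), (1 : ℝ), (0 : ℝ))‖ ≤ 1 := by simp [Prod.norm_def]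
  have n3 : ‖((0 : ℝ), (0 : ℝ), (1 : ℝ))‖ ≤ 1 := by simp [Prod.norm_def]
  have hC0 : 0 ≤ C := by
    have := (abs_nonneg _).trans (hχd 0 0 _ n1)
    simpa using this
  have hχd' : ∀ n x e, ‖e‖ ≤ 1 → |fderiv ℝ (χ n) x e| ≤ C := fun n x e he =>
    (hχd n x e he).trans (div_le_self hC0 (by linarith [Nat.cast_nonneg (α := ℝ) n]))
  have hCt : Filter.Tendsto (fun n : ℕ => C / ((n : ℝ) + 1)) Filter.atTop (nhds 0) := by
    simpa [div_eq_mul_inv] using hεt.const_mul C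
  have hdt : ∀ x e, ‖e‖ ≤ 1 → Filter.Tendsto (fun n => fderiv ℝ (χ n) x e) Filter.atTop (nhds 0) :=
    fun x e he => squeeze_zero_norm (fun n => hχd n x e he) hCt
  have hstep := fun n => energy_step hU hw hw0 hC heq hG (hε n) (hsc n) (hsz n) (hχ n) (hχc n)
  have hdwc : ContinuousOn (fderiv ℝ w) U :=
    hC.continuousOn_fderiv_of_isOpen hU (by norm_num)
  have L1 : Filter.Tendsto (fun n => ∫ x in U, (χ n x * prim (s n) (w x)) ^ 2) Filter.atTop
      (nhds (∫ x in U, w x ^ 2)) := by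
    apply tendsto_integral_of_dominated_convergence (fun x => w x ^ 2) _ hi
    · intro n
      refine Filter.Eventually.of_forall fun x => ?_
      rw [Real.norm_eq_abs, abs_of_nonneg (sq_nonneg _), sq_le_sq, abs_mul, abs_of_nonneg (hχ0 n x)]
      exact (mul_le_of_le_one_left (abs_nonneg _) (hχ1 n x)).trans (hφb n _)
    · refine Filter.Eventually.of_forall fun x => ?_
      simpa using ((hχt x).mul (hφt (w x))).pow 2
    · intro n
      have := (hχ n).continuous
      have := hφc n
      exact Continuous.aestronglyMeasurable (by fun_prop)
  have L2 : Filter.Tendsto (fun n => ∫ x in U, rhsH lam (χ n) w (s n) (prim (s n))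
      (prim fun t => s n t ^ 2) x) Filter.atTop (nhds (∫ x in U, lam * w x ^ 2)) := by
    apply tendsto_integral_of_dominated_convergence
      (fun x => (|lam| + 6 * C + 3 * C ^ 2) * w x ^ 2 + 2 * C * gradSq3 w x) _
      ((hi.const_mul _).add (hgi.const_mul _))
    · intro n
      refine Filter.Eventually.of_forall fun x => ?_
      rw [Real.norm_eq_abs]
      exact rhs_bound (hχ0 n x) (hχ1 n x) (hs0 n _) (hs1 n _) (hφb n _) (hGb n _) hC0
        (hχd' n x _ n1) (hχd' n x _ n2) (hχd' n x _ n3)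
    · refine Filter.Eventually.of_forall fun x => ?_
      have d1 := hdt x _ n1
      have d2 := hdt x _ n2
      have d3 := hdt x _ n3
      have A := ((((hχt x).pow 2).mul (hGt (w x))).mul_const (w x)).const_mul lam
      have B0 := ((d1.mul_const (fderiv ℝ w x (1,0,0))).add
        (d2.mul_const (fderiv ℝ w x (0,1,0)))).add (d3.mul_const (fderiv ℝ w x (0,0,1)))
      simp only [zero_mul, add_zero] at B0
      have B := bdd_le_mul_tendsto_zero' (4 * |w x|) (Filter.Eventually.of_forall fun n =>
        cross_bound (hχ0 n x) (hχ1 n x) (hs0 n (w x)) (hs1 n (w x)) (hφb n (w x)) (hGb n (w x))) B0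
      have D := ((hφt (w x)).pow 2).mul (((d1.pow 2).add (d2.pow 2)).add (d3.pow 2))
      have E := (A.add B).add D
      unfold rhsH gradSq3
      convert E using 2
      simp only [one_pow]
      ring
    · intro n
      have h1 := (hχ n).continuous
      have h2 := hφc n
      have h3 := hGc n
      have h4 := (hχ n).continuous_fderiv one_ne_zero
      have h5 := hsc n
      refine ContinuousOn.aestronglyMeasurable ?_ hU.measurableSet
      unfold rhsH gradSq3
      fun_prop
  have hfin := le_of_tendsto_of_tendsto' (L1.const_mul lamG) L2 hstep
  rw [integral_const_mul] at hfin
  have h0 : 0 ≤ ∫ x in U, w x ^ 2 := integral_nonneg fun x => sq_nonneg _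
  have h1 : ∫ x in U, w x ^ 2 = 0 := by nlinarith
  have h2 : ∫ x in U, w x ^ 2 = ∫ x, w x ^ 2 :=
    setIntegral_eq_integral_of_forall_compl_eq_zero fun x hx => by simp [hw0 x hx]
  have hi' : Integrable (fun x => w x ^ 2) := by
    rw [← integrableOn_univ]
    exact hi.of_forall_sdiff_eq_zero MeasurableSet.univ fun x hx => by simp [hw0 x hx.2]
  have : (volume : Measure (ℝ × ℝ × ℝ)).IsOpenPosMeasure :=
    inferInstanceAs ((volume : Measure ℝ).prod (volume : Measure (ℝ × ℝ))).IsOpenPosMeasure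
  rw [h2, integral_eq_zero_iff_of_nonneg (fun x => sq_nonneg _) hi'] at h1
  have h3 := (hw.pow 2).ae_eq_iff_eq (μ := volume) continuous_const |>.1 h1
  have h4 : w x ^ 2 = 0 := congrFun h3 x
  simpa using h4

end Core

/-! ### Coordinate permutations and the conclusion -/

/-- The reflection `(x₁,x₂,x₃) ↦ (x₂,x₁,x₃)` in the diagonal plane `x₁ = x₂`. -/
def swapA : (ℝ × ℝ × ℝ) ≃L[ℝ] (ℝ × ℝ × ℝ) :=
  ContinuousLinearEquiv.equivOfInverse
    ((ContinuousLinearMap.fst ℝ ℝ ℝ ∘L ContinuousLinearMap.snd ℝ ℝ (ℝ × ℝ)).prod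
      ((ContinuousLinearMap.fst ℝ ℝ (ℝ × ℝ)).prod
        (ContinuousLinearMap.snd ℝ ℝ ℝ ∘L ContinuousLinearMap.snd ℝ ℝ (ℝ × ℝ))))
    ((ContinuousLinearMap.fst ℝ ℝ ℝ ∘L ContinuousLinearMap.snd ℝ ℝ (ℝ × ℝ)).prod
      ((ContinuousLinearMap.fst ℝ ℝ (ℝ × ℝ)).prod
        (ContinuousLinearMap.snd ℝ ℝ ℝ ∘L ContinuousLinearMap.snd ℝ ℝ (ℝ × ℝ))))
    (fun _ => rfl) (fun _ => rfl)

/-- The reflection `(x₁,x₂,x₃) ↦ (x₁,x₃,x₂)` in the diagonal plane `x₂ = x₃`. -/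
def swapB : (ℝ × ℝ × ℝ) ≃L[ℝ] (ℝ × ℝ × ℝ) :=
  (ContinuousLinearEquiv.refl ℝ ℝ).prodCongr (ContinuousLinearEquiv.prodComm ℝ ℝ ℝ)

lemma swapA_apply (x : ℝ × ℝ × ℝ) : swapA x = (x.2.1, x.1, x.2.2) := rfl
lemma swapB_apply (x : ℝ × ℝ × ℝ) : swapB x = (x.1, x.2.2, x.2.1) := rfl

lemma swapB_mp : MeasurePreserving swapB := by
  have : MeasurePreserving (Prod.map (id : ℝ → ℝ) (Prod.swap : ℝ × ℝ → ℝ × ℝ))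
      (volume.prod volume) (volume.prod volume) :=
    (MeasurePreserving.id _).prod (Measure.measurePreserving_swap)
  exact this

lemma swapA_mp : MeasurePreserving swapA := by
  have h1 : MeasurePreserving (Prod.map (Prod.swap : ℝ × ℝ → ℝ × ℝ) (id : ℝ → ℝ))
      (volume.prod volume) (volume.prod volume) :=
    (Measure.measurePreserving_swap).prod (MeasurePreserving.id _)
  have h2 := volume_preserving_prodAssoc (α₁ := ℝ) (β₁ := ℝ) (γ₁ := ℝ)
  exact (h2.comp h1).comp (h2.symm _)

lemma mem_Lam3_swapA (x : ℝ × ℝ × ℝ) : swapA x ∈ Lam3 ↔ x ∈ Lam3 := by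
  simp only [Lam3, mem_ofPred_eq, swapA_apply, lt_min_iff, min_lt_iff]
  tauto

lemma mem_Lam3_swapB (x : ℝ × ℝ × ℝ) : swapB x ∈ Lam3 ↔ x ∈ Lam3 := by
  simp only [Lam3, mem_ofPred_eq, swapB_apply, lt_min_iff, min_lt_iff]
  tauto

lemma pd3_comp (P : (ℝ × ℝ × ℝ) ≃L[ℝ] (ℝ × ℝ × ℝ)) (e : ℝ × ℝ × ℝ) (u : ℝ × ℝ × ℝ → ℝ) :
    pd3 e (u ∘ P) = pd3 (P e) u ∘ P := by
  funext x
  simp [pd3, P.comp_right_fderiv]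

lemma lap3_swapA (u : ℝ × ℝ × ℝ → ℝ) (x) : lap3 (u ∘ swapA) x = lap3 u (swapA x) := by
  simp only [lap3, pd3_comp, swapA_apply, Function.comp_apply]
  ring

lemma lap3_swapB (u : ℝ × ℝ × ℝ → ℝ) (x) : lap3 (u ∘ swapB) x = lap3 u (swapB x) := by
  simp only [lap3, pd3_comp, swapB_apply, Function.comp_apply]
  ring

lemma gradSq3_eq (u : ℝ × ℝ × ℝ → ℝ) (x) : gradSq3 u x =
    pd3 (1,0,0) u x ^ 2 + pd3 (0,1,0) u x ^ 2 + pd3 (0,0,1) u x ^ 2 := rfl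

lemma gradSq3_swapA (u : ℝ × ℝ × ℝ → ℝ) (x) : gradSq3 (u ∘ swapA) x = gradSq3 u (swapA x) := by
  simp only [gradSq3_eq, pd3_comp, swapA_apply, Function.comp_apply]
  ring

lemma gradSq3_swapB (u : ℝ × ℝ × ℝ → ℝ) (x) : gradSq3 (u ∘ swapB) x = gradSq3 u (swapB x) := by
  simp only [gradSq3_eq, pd3_comp, swapB_apply, Function.comp_apply]
  ring

lemma IsEigenLam.comp {lam : ℝ} {u : ℝ × ℝ × ℝ → ℝ} (h : IsEigenLam lam u)
    (P : (ℝ × ℝ × ℝ) ≃L[ℝ] (ℝ × ℝ × ℝ)) (hP : ∀ x, P x ∈ Lam3 ↔ x ∈ Lam3)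
    (hm : MeasurePreserving P) (hl : ∀ x, lap3 (u ∘ P) x = lap3 u (P x))
    (hg : ∀ x, gradSq3 (u ∘ P) x = gradSq3 u (P x)) : IsEigenLam lam (u ∘ P) := by
  obtain ⟨h1, h2, h3, h4, h5, h6, x, hx⟩ := h
  have hpre : P ⁻¹' Lam3 = Lam3 := by ext x; exact hP x
  have hme : MeasurableEmbedding P := P.toHomeomorph.measurableEmbedding
  have hi : ∀ f : ℝ × ℝ × ℝ → ℝ, IntegrableOn f Lam3 → IntegrableOn (fun x => f (P x)) Lam3 := by
    intro f hf
    have := (hm.integrableOn_comp_preimage hme (f := f) (s := Lam3)).2 hf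
    rwa [hpre] at this
  refine ⟨h1.comp P.continuous, fun x hx => h2 _ (by rwa [hP]), ?_, hi _ h4, ?_, ?_, P.symm x, ?_⟩
  · exact h3.comp P.contDiff.contDiffOn fun x hx => (hP x).2 hx
  · simp only [hg]; exact hi _ h5
  · intro x hx
    rw [hl]
    exact h6 _ ((hP x).2 hx)
  · simpa using hx

lemma IsEigenLam.swapA {lam : ℝ} {u : ℝ × ℝ × ℝ → ℝ} (h : IsEigenLam lam u) :
    IsEigenLam lam (u ∘ swapA) :=
  h.comp _ mem_Lam3_swapA swapA_mp (lap3_swapA u) (gradSq3_swapA u)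

lemma IsEigenLam.swapB {lam : ℝ} {u : ℝ × ℝ × ℝ → ℝ} (h : IsEigenLam lam u) :
    IsEigenLam lam (u ∘ swapB) :=
  h.comp _ mem_Lam3_swapB swapB_mp (lap3_swapB u) (gradSq3_swapB u)

lemma isOpen_Lam3 : IsOpen Lam3 := by
  have hc : Continuous fun x : ℝ × ℝ × ℝ => min x.1 (min x.2.1 x.2.2) := by fun_prop
  exact (isOpen_lt continuous_const hc).inter (isOpen_lt hc continuous_const)

/-- The antisymmetric part of `u` vanishes on `x₂ ≤ x₁`: there `min(x₁,x₂,x₃) = min(x₂,x₃)`, so the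
slices of `Λ ∩ {x₂ < x₁}` at fixed `x₁` lie in `Γ` and `core` applies. -/
lemma half_zero {lam : ℝ} {u : ℝ × ℝ × ℝ → ℝ} (hlam : lam < lamG) (h : IsEigenLam lam u)
    (x : ℝ × ℝ × ℝ) (hx : x.2.1 ≤ x.1) : u x - u (swapA x) = 0 := by
  obtain ⟨b1, b2, b3, b4, b5, b6, -⟩ := h.swapA
  obtain ⟨a1, a2, a3, a4, a5, a6, -⟩ := h
  set U : Set (ℝ × ℝ × ℝ) := {x | x ∈ Lam3 ∧ x.2.1 < x.1} with hUdef
  set v : ℝ × ℝ × ℝ → ℝ := fun x => u x - (u ∘ swapA) x with hv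
  set w : ℝ × ℝ × ℝ → ℝ := fun x => if x.2.1 ≤ x.1 then v x else 0 with hw
  have hU : IsOpen U := isOpen_Lam3.inter
    (isOpen_lt (continuous_fst.comp continuous_snd) continuous_fst)
  have hUL : U ⊆ Lam3 := fun x hx => hx.1
  have hdiag : ∀ x : ℝ × ℝ × ℝ, x.2.1 = x.1 → v x = 0 := by
    rintro ⟨p, q, r⟩ hpq
    simp only at hpq
    subst hpq
    simp [hv, swapA_apply]
  have hwv : ∀ x ∈ U, w =ᶠ[nhds x] v := by
    intro x hx
    filter_upwards [hU.mem_nhds hx] with y hy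
    simp [hw, hy.2.le]
  have hat : ∀ x ∈ U, ContDiffAt ℝ 2 u x ∧ ContDiffAt ℝ 2 (u ∘ swapA) x := fun x hx =>
    ⟨a3.contDiffAt (isOpen_Lam3.mem_nhds hx.1), b3.contDiffAt (isOpen_Lam3.mem_nhds hx.1)⟩
  have hpdv : ∀ x ∈ U, ∀ e, pd3 e w x = pd3 e u x - pd3 e (u ∘ swapA) x := by
    intro x hx e
    simp only [pd3]
    rw [(hwv x hx).fderiv_eq, hv, fderiv_fun_sub ((hat x hx).1.differentiableAt two_ne_zero)
      ((hat x hx).2.differentiableAt two_ne_zero)]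
    rfl
  have hpd2 : ∀ x ∈ U, ∀ e, pd3 e (pd3 e w) x =
      pd3 e (pd3 e u) x - pd3 e (pd3 e (u ∘ swapA)) x := by
    intro x hx e
    have h1 : pd3 e w =ᶠ[nhds x] fun y => pd3 e u y - pd3 e (u ∘ swapA) y := by
      filter_upwards [hU.mem_nhds hx] with y hy using hpdv y hy e
    have hd : ∀ f : ℝ × ℝ × ℝ → ℝ, ContDiffAt ℝ 2 f x → DifferentiableAt ℝ (pd3 e f) x :=
      fun f hf => ((hf.fderiv_right (m := 1) (by norm_num)).clm_apply
        contDiffAt_const).differentiableAt one_ne_zero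
    have h2 := h1.fderiv_eq (𝕜 := ℝ)
    rw [fderiv_fun_sub (hd _ (hat x hx).1) (hd _ (hat x hx).2)] at h2
    show fderiv ℝ (pd3 e w) x e = _
    rw [h2]
    rfl
  have hwc : Continuous w := by
    apply Continuous.if_le (a1.sub b1) continuous_const (by fun_prop) (by fun_prop)
    exact hdiag
  have hw0 : ∀ x ∉ U, w x = 0 := by
    intro x hx
    simp only [hw]
    split_ifs with hle
    · rcases hle.eq_or_lt with he | hlt
      · exact hdiag x he
      · have : x ∉ Lam3 := fun hL => hx ⟨hL, hlt⟩
        simp only [hv]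
        rw [a2 x this, b2 x this, sub_zero]
    · rfl
  have hwC : ContDiffOn ℝ 2 w U := fun x hx =>
    (((hat x hx).1.sub (hat x hx).2).congr_of_eventuallyEq (hwv x hx)).contDiffWithinAt
  have hwd : ContinuousOn (fderiv ℝ w) U := hwC.continuousOn_fderiv_of_isOpen hU (by norm_num)
  have key := core hU hwc hw0 hwC ?_ ?_ hlam ?_ ?_ x
  · simp only [hw, if_pos hx] at key
    exact key
  · refine Integrable.mono' (((a4.add b4).mono_set hUL).const_mul 2)
      (hwc.pow 2).aestronglyMeasurable ?_
    filter_upwards [ae_restrict_mem hU.measurableSet] with y hy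
    rw [Real.norm_eq_abs, abs_of_nonneg (sq_nonneg _), (hwv y hy).self_of_nhds]
    simp only [hv, Pi.add_apply]
    nlinarith [sq_nonneg (u y + (u ∘ swapA) y)]
  · refine Integrable.mono' (((a5.add b5).mono_set hUL).const_mul 2)
      (ContinuousOn.aestronglyMeasurable ?_ hU.measurableSet) ?_
    · unfold gradSq3; fun_prop
    filter_upwards [ae_restrict_mem hU.measurableSet] with y hy
    simp only [gradSq3_eq, hpdv y hy, Pi.add_apply]
    rw [Real.norm_eq_abs, abs_of_nonneg (by positivity)]
    nlinarith [sq_nonneg (pd3 (1,0,0) u y + pd3 (1,0,0) (u ∘ swapA) y),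
      sq_nonneg (pd3 (0,1,0) u y + pd3 (0,1,0) (u ∘ swapA) y),
      sq_nonneg (pd3 (0,0,1) u y + pd3 (0,0,1) (u ∘ swapA) y)]
  · intro y hy
    have h1 := a6 y hy.1
    have h2 := b6 y hy.1
    rw [(hwv y hy).self_of_nhds]
    simp only [lap3, hpd2 y hy] at h1 h2 ⊢
    simp only [hv]
    linear_combination h1 - h2
  · rintro y ⟨⟨hy1, hy2⟩, hy3⟩
    simp only [Gam, mem_ofPred_eq, lt_min_iff, min_lt_iff] at hy1 hy2 ⊢
    refine ⟨hy1.2, ?_⟩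
    rcases hy2 with hy2 | hy2
    · exact Or.inl (hy3.trans hy2)
    · exact hy2

lemma symA {lam : ℝ} {u : ℝ × ℝ × ℝ → ℝ} (hlam : lam < lamG) (h : IsEigenLam lam u)
    (x : ℝ × ℝ × ℝ) : u x = u (swapA x) := by
  rcases le_total x.2.1 x.1 with hx | hx
  · exact sub_eq_zero.1 (half_zero hlam h x hx)
  · exact (sub_eq_zero.1 (half_zero hlam h (swapA x) hx)).symm

/-- The swap of `x₂, x₃` is conjugate to that of `x₁, x₂` by a cyclic permutation, so `symA` applies
to the eigenfunction `u ∘ swapA ∘ swapB`. -/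
lemma symB {lam : ℝ} {u : ℝ × ℝ × ℝ → ℝ} (hlam : lam < lamG) (h : IsEigenLam lam u)
    (x : ℝ × ℝ × ℝ) : u x = u (swapB x) :=
  symA hlam (h.swapA.swapB) (x.2.1, x.2.2, x.1)

/-- Lemma 3.3: any eigenfunction of the Dirichlet Laplacian on the
Fichera layer `Λ` with eigenvalue below `λ₁(Γ)` is invariant under all permutations of
the coordinates: `u(x₁,x₂,x₃) = u(x_{σ(1)},x_{σ(2)},x_{σ(3)})` for every permutation
`σ` of `{1,2,3}` (equivalently, `u` is even with respect to the three diagonal planes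
`x_i = x_j`). -/
theorem eigenfunction_symmetric :
    ∀ (lam : ℝ) (u : ℝ × ℝ × ℝ → ℝ), lam < lamG → IsEigenLam lam u →
      ∀ σ : Equiv.Perm (Fin 3), ∀ x : ℝ × ℝ × ℝ,
        u x = u (coord3 x (σ 0), coord3 x (σ 1), coord3 x (σ 2)) := by
  intro lam u hlam h σ x
  obtain ⟨x, y, z⟩ := x
  have hA : ∀ a b c, u (a, b, c) = u (b, a, c) := fun a b c => symA hlam h (a, b, c)
  have hB : ∀ a b c, u (a, b, c) = u (a, c, b) := fun a b c => symB hlam h (a, b, c)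
  have h01 : σ 0 ≠ σ 1 := σ.injective.ne (by decide)
  have h02 : σ 0 ≠ σ 2 := σ.injective.ne (by decide)
  have h12 : σ 1 ≠ σ 2 := σ.injective.ne (by decide)
  generalize σ 0 = i at *
  generalize σ 1 = j at *
  generalize σ 2 = k at *
  fin_cases i <;> fin_cases j <;> fin_cases k <;> simp [coord3] at h01 h02 h12 ⊢
  · exact hB x y z
  · exact hA x y z
  · rw [hA x y z, hB y x z]
  · rw [hB x y z, hA x z y]
  · rw [hA x y z, hB y x z, hA y z x]
end
end

section
/- For every R > 0 one has λ₁(Γ_R) ≥ π²/2. Consequently, since R ↦ λ₁(Γ_R) is increasing on (0,∞), the right limit λ(0₊)=lim_{R→0⁺} λ₁(Γ_R) exists and satisfies λ(0₊) ≥ π²/2. -/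
/-!
The finite guide `Γ_R` is the disjoint union of the square `(-1,0)²` and two arms `[0,R) × (-1,0)`
and `(-1,0) × [0,R)`. An admissible `u` vanishes on the two outer sides of the square, so the sharp
one-dimensional Poincaré inequality with one Dirichlet end, applied in each variable, gives
`∫ |∇u|² ≥ (π²/4 + π²/4) ∫ u²` on the square (`AdmR.square`). On the arms `u` vanishes on both long
sides, so the transverse derivative alone gives the factor `π²` (`AdmR.arm_snd`, `AdmR.arm_fst`).
Together they yield `λ₁(Γ_R) ≥ π²/2`.

The limit at `0₊` exists by monotonicity. For `R ≤ R'`, an admissible function on `Γ_R'` restricts to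
an admissible one on `Γ_R`, and on the rest of the arms its energy is at least `π²` times its squared
norm; hence `λ₁(Γ_R) ≤ λ₁(Γ_R')` whenever `λ₁(Γ_R) ≤ π²` (`lamR_mono_of_le`). The latter holds for
small `R` by means of an explicit piecewise polynomial `C¹` trial function
(`lamR_le_pi_sq_of_small`), which also shows that the infimum defining `lamR` is over a nonempty set.
-/


noncomputable section
open MeasureTheory Set Real

/-! ### Sharp Poincaré inequalities on an interval -/

/-- A Poincaré inequality with a constant short of the sharp one. With `c(x) = -k tan(k(x - m))`,
which solves `c' = -k² - c²`, one has `(c f²)' ≤ f'² - k² f²`, and `c f²` vanishes at both ends. The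
endpoint condition `b = m` is the Neumann case, where `c(b) = 0`. -/
theorem one_dim_k {f f' : ℝ → ℝ} {a b m k : ℝ} (hab : a ≤ b)
    (hf : ∀ x, HasDerivAt f (f' x) x) (hf' : Continuous f')
    (hk : ∀ x ∈ Icc a b, k * (x - m) ∈ Ioo (-(π / 2)) (π / 2))
    (ha : f a = 0) (hb : f b = 0 ∨ b = m) :
    k ^ 2 * ∫ x in a..b, f x ^ 2 ≤ ∫ x in a..b, f' x ^ 2 := by
  have hfc : Continuous f := continuous_iff_continuousAt.2 fun x => (hf x).continuousAt
  have hcos : ∀ x ∈ Icc a b, cos (k * (x - m)) ≠ 0 := fun x hx =>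
    (cos_pos_of_mem_Ioo (hk x hx)).ne'
  have htan : ContinuousOn (fun x => tan (k * (x - m))) (Icc a b) := fun x hx => by
    have h1 : ContinuousAt tan (k * (x - m)) := continuousAt_tan.2 (hcos x hx)
    have h2 : ContinuousAt (fun x => k * (x - m)) x := by fun_prop
    exact (ContinuousAt.comp (f := fun x => k * (x - m)) h1 h2).continuousWithinAt
  set D : ℝ → ℝ := fun x => -(k ^ 2 * (1 + tan (k * (x - m)) ^ 2) * f x ^ 2
    + 2 * k * tan (k * (x - m)) * f x * f' x) with hD
  have hDc : ContinuousOn D (Icc a b) := by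
    have := hfc.continuousOn (s := Icc a b)
    have := hf'.continuousOn (s := Icc a b)
    rw [hD]; fun_prop
  have hDi : IntervalIntegrable D volume a b :=
    ContinuousOn.intervalIntegrable (by rwa [uIcc_of_le hab])
  have hder : ∀ x ∈ uIcc a b,
      HasDerivAt (fun x => -(k * tan (k * (x - m)) * f x ^ 2)) (D x) x := by
    intro x hx
    rw [uIcc_of_le hab] at hx
    have h1 : HasDerivAt (fun x => k * (x - m)) k x := by
      simpa using ((hasDerivAt_id x).sub_const m).const_mul k
    have h2 := (hasDerivAt_tan (hcos x hx)).comp x h1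
    have h3 := ((h2.const_mul k).mul ((hf x).pow 2)).neg
    refine h3.congr_deriv ?_
    have h4 : 1 / cos (k * (x - m)) ^ 2 = 1 + tan (k * (x - m)) ^ 2 := by
      rw [← inv_one_add_tan_sq (hcos x hx)]; simp
    simp only [Function.comp, h4, hD]
    simp
    ring
  have hint := intervalIntegral.integral_eq_sub_of_hasDerivAt hder hDi
  have h0 : ∫ x in a..b, D x = 0 := by
    rw [hint, ha]
    rcases hb with hb | hb <;> simp [hb]
  have hmono : ∫ x in a..b, D x ≤ ∫ x in a..b, (f' x ^ 2 - k ^ 2 * f x ^ 2) := by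
    refine intervalIntegral.integral_mono_on hab hDi
      (Continuous.intervalIntegrable (by fun_prop) _ _) fun x _ => ?_
    simp only [hD]
    nlinarith [sq_nonneg (f' x + k * tan (k * (x - m)) * f x)]
  rw [intervalIntegral.integral_sub (Continuous.intervalIntegrable (by fun_prop) _ _)
    (Continuous.intervalIntegrable (by fun_prop) _ _),
    intervalIntegral.integral_const_mul] at hmono
  linarith

/-- The sharp constant is reached by letting `k` tend to `K` from below. -/
theorem le_of_lt_sq {K A B : ℝ} (hK : 0 < K)
    (h : ∀ k, 0 < k → k < K → k ^ 2 * A ≤ B) : K ^ 2 * A ≤ B := by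
  have h1 : Filter.Tendsto (fun k : ℝ => k ^ 2 * A) (nhdsWithin K (Iio K)) (nhds (K ^ 2 * A)) :=
    ((by fun_prop : Continuous fun k : ℝ => k ^ 2 * A).tendsto K).mono_left nhdsWithin_le_nhds
  refine le_of_tendsto h1 ?_
  filter_upwards [Ioo_mem_nhdsLT hK] with k hk
  exact h k hk.1 hk.2

/-- Poincaré inequality on `(-1,0)`, Dirichlet at `-1` and free at `0`. -/
theorem wirtinger_mixed {f f' : ℝ → ℝ}
    (hf : ∀ x, HasDerivAt f (f' x) x) (hf' : Continuous f') (ha : f (-1) = 0) :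
    (π / 2) ^ 2 * ∫ x in Ioo (-1 : ℝ) 0, f x ^ 2 ≤ ∫ x in Ioo (-1 : ℝ) 0, f' x ^ 2 := by
  simp only [← integral_Ioc_eq_integral_Ioo,
    ← intervalIntegral.integral_of_le (show (-1 : ℝ) ≤ 0 by norm_num)]
  refine le_of_lt_sq (by positivity) fun k hk hk2 => ?_
  refine one_dim_k (m := 0) (by norm_num) hf hf' (fun x hx => ?_) ha (Or.inr rfl)
  constructor <;> nlinarith [hx.1, hx.2]

/-- Poincaré inequality on `(-1,0)`, Dirichlet at both ends. -/
theorem wirtinger_dirichlet {f f' : ℝ → ℝ}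
    (hf : ∀ x, HasDerivAt f (f' x) x) (hf' : Continuous f') (ha : f (-1) = 0) (hb : f 0 = 0) :
    π ^ 2 * ∫ x in Ioo (-1 : ℝ) 0, f x ^ 2 ≤ ∫ x in Ioo (-1 : ℝ) 0, f' x ^ 2 := by
  simp only [← integral_Ioc_eq_integral_Ioo,
    ← intervalIntegral.integral_of_le (show (-1 : ℝ) ≤ 0 by norm_num)]
  refine le_of_lt_sq (by positivity) fun k hk hk2 => ?_
  refine one_dim_k (m := -1 / 2) (by norm_num) hf hf' (fun x hx => ?_) ha (Or.inl hb)
  constructor <;> nlinarith [hx.1, hx.2]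

/-! ### Partial derivatives and slicing -/

theorem hasDerivAt_fst {u : ℝ × ℝ → ℝ} (hu : ContDiff ℝ 1 u) (x y : ℝ) :
    HasDerivAt (fun x => u (x, y)) (fderiv ℝ u (x, y) (1, 0)) x :=
  (hu.differentiable (by simp) (x, y)).hasFDerivAt.comp_hasDerivAt x
    ((hasDerivAt_id x).prodMk (hasDerivAt_const x y))

theorem hasDerivAt_snd {u : ℝ × ℝ → ℝ} (hu : ContDiff ℝ 1 u) (x y : ℝ) :
    HasDerivAt (fun y => u (x, y)) (fderiv ℝ u (x, y) (0, 1)) y :=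
  (hu.differentiable (by simp) (x, y)).hasFDerivAt.comp_hasDerivAt y
    ((hasDerivAt_const y x).prodMk (hasDerivAt_id y))

theorem continuous_partial {u : ℝ × ℝ → ℝ} (hu : ContDiff ℝ 1 u) (v : ℝ × ℝ) :
    Continuous fun p => fderiv ℝ u p v :=
  (hu.continuous_fderiv (by simp)).clm_apply continuous_const

theorem integrableOn_rect {g : ℝ × ℝ → ℝ} (hg : Continuous g) {S : Set (ℝ × ℝ)} {a b c d : ℝ}
    (hS : S ⊆ Icc a b ×ˢ Icc c d) : IntegrableOn g S :=
  (hg.continuousOn.integrableOn_compact (isCompact_Icc.prod isCompact_Icc)).mono_set hS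

/-- An inequality between integrals over all slices `{x} × Y` integrates to one over `X × Y`. -/
theorem slice_snd {g h : ℝ × ℝ → ℝ} (hg : Continuous g) (hh : Continuous h) {κ a b c d : ℝ}
    {X Y : Set ℝ} (hX : MeasurableSet X) (hXs : X ⊆ Icc a b) (hYs : Y ⊆ Icc c d)
    (H : ∀ x ∈ X, κ * ∫ y in Y, g (x, y) ≤ ∫ y in Y, h (x, y)) :
    κ * ∫ p in X ×ˢ Y, g p ≤ ∫ p in X ×ˢ Y, h p := by
  have ig := integrableOn_rect hg (prod_mono hXs hYs)
  have ih := integrableOn_rect hh (prod_mono hXs hYs)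
  rw [Measure.volume_eq_prod, setIntegral_prod _ ig, setIntegral_prod _ ih, ← integral_const_mul]
  refine setIntegral_mono_on ?_ ?_ hX H
  · refine Integrable.const_mul ?_ _
    rw [IntegrableOn, Measure.volume_eq_prod, ← Measure.prod_restrict] at ig
    exact ig.integral_prod_left
  · rw [IntegrableOn, Measure.volume_eq_prod, ← Measure.prod_restrict] at ih
    exact ih.integral_prod_left

/-- An inequality between integrals over all slices `X × {y}` integrates to one over `X × Y`. -/
theorem slice_fst {g h : ℝ × ℝ → ℝ} (hg : Continuous g) (hh : Continuous h) {κ a b c d : ℝ}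
    {X Y : Set ℝ} (hY : MeasurableSet Y) (hXs : X ⊆ Icc a b) (hYs : Y ⊆ Icc c d)
    (H : ∀ y ∈ Y, κ * ∫ x in X, g (x, y) ≤ ∫ x in X, h (x, y)) :
    κ * ∫ p in X ×ˢ Y, g p ≤ ∫ p in X ×ˢ Y, h p := by
  have key := slice_snd (hg.comp continuous_swap) (hh.comp continuous_swap) hY hYs hXs H
  simp only [Function.comp_def] at key
  rw [Measure.volume_eq_prod, setIntegral_prod_swap X Y (fun p => g p),
    setIntegral_prod_swap X Y (fun p => h p)] at key
  exact key

/-! ### Geometry of the finite guide -/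

theorem mem_GamR {R : ℝ} {p : ℝ × ℝ} :
    p ∈ GamR R ↔ -1 < p.1 ∧ -1 < p.2 ∧ p.1 < R ∧ p.2 < R ∧ (p.1 < 0 ∨ p.2 < 0) := by
  simp only [GamR, Gam, Box, mem_inter_iff, mem_ofPred_eq, lt_min_iff, min_lt_iff, abs_lt]
  constructor
  · rintro ⟨⟨⟨h1, h2⟩, h3⟩, ⟨_, h4⟩, _, h5⟩
    exact ⟨h1, h2, by linarith, by linarith, h3⟩
  · rintro ⟨h1, h2, h3, h4, h5⟩
    exact ⟨⟨⟨h1, h2⟩, h5⟩, ⟨by linarith, by linarith⟩, by linarith, by linarith⟩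

theorem isOpen_Gam : IsOpen Gam := by
  have h : Continuous fun p : ℝ × ℝ => min p.1 p.2 := by fun_prop
  exact (isOpen_lt continuous_const h).inter (isOpen_lt h continuous_const)

theorem isOpen_Box (L : ℝ) : IsOpen (Box L) := by
  have h1 : Continuous fun p : ℝ × ℝ => |p.1 + 1| := by fun_prop
  have h2 : Continuous fun p : ℝ × ℝ => |p.2 + 1| := by fun_prop
  exact (isOpen_lt h1 continuous_const).inter (isOpen_lt h2 continuous_const)

/-- The Dirichlet part of the boundary consists of the boundary points inside the open box, i.e. the
points of the box that are adherent to `Γ_R` and lie outside `Γ`. -/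
theorem mem_DirB {R : ℝ} {p : ℝ × ℝ} :
    p ∈ DirB R ↔ p ∈ closure (GamR R) ∧ p ∈ Box (R + 1) ∧ p ∉ Gam := by
  have hO : IsOpen (GamR R) := isOpen_Gam.inter (isOpen_Box _)
  have hcl : p ∈ closure (GamR R) → p ∈ closure (Box (R + 1)) :=
    fun h => closure_mono inter_subset_right h
  rw [DirB, Sig, hO.frontier_eq, (isOpen_Box _).frontier_eq]
  simp only [GamR, mem_sdiff, mem_inter_iff] at hcl ⊢
  tauto

theorem GamR_mono {R R' : ℝ} (h : R ≤ R') : GamR R ⊆ GamR R' := fun _ hp =>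
  ⟨hp.1, hp.2.1.trans_le (by linarith), hp.2.2.trans_le (by linarith)⟩

theorem DirB_mono {R R' : ℝ} (h : R ≤ R') : DirB R ⊆ DirB R' := fun p hp => by
  rw [mem_DirB] at hp ⊢
  exact ⟨closure_mono (GamR_mono h) hp.1,
    ⟨hp.2.1.1.trans_le (by linarith), hp.2.1.2.trans_le (by linarith)⟩, hp.2.2⟩

theorem GamR_zero : GamR 0 = II ×ˢ II := by
  ext p
  simp only [mem_GamR, II, mem_prod, mem_Ioo]
  tauto

/-- Passing from `Γ_R` to `Γ_R'` adds one rectangle to each arm. -/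
theorem GamR_split {R R' : ℝ} (hR : 0 ≤ R) (h : R ≤ R') :
    GamR R' = GamR R ∪ Ico R R' ×ˢ II ∪ II ×ˢ Ico R R' := by
  ext p
  simp only [mem_GamR, II, mem_union, mem_prod, mem_Ioo, mem_Ico]
  constructor
  · rintro ⟨h1, h2, h3, h4, h5⟩
    rcases lt_or_ge p.1 R with h6 | h6
    · rcases lt_or_ge p.2 R with h7 | h7
      · exact Or.inl (Or.inl ⟨h1, h2, h6, h7, h5⟩)
      · exact Or.inr ⟨⟨h1, h5.resolve_right (by linarith)⟩, h7, h4⟩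
    · exact Or.inl (Or.inr ⟨⟨h6, h3⟩, h2, h5.resolve_left (by linarith)⟩)
  · rintro ((⟨h1, h2, h3, h4, h5⟩ | ⟨⟨h1, h2⟩, h3, h4⟩) | ⟨⟨h1, h2⟩, h3, h4⟩)
    · exact ⟨h1, h2, by linarith, by linarith, h5⟩
    · exact ⟨by linarith, h3, h2, by linarith, Or.inr h4⟩
    · exact ⟨h1, by linarith, by linarith, h4, Or.inl h2⟩

theorem GamR_subset (R : ℝ) : GamR R ⊆ Icc (-1) R ×ˢ Icc (-1) R := fun p hp => by
  rw [mem_GamR] at hp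
  exact ⟨⟨hp.1.le, hp.2.2.1.le⟩, hp.2.1.le, hp.2.2.2.1.le⟩

theorem II_subset : II ⊆ Icc (-1) 0 := Ioo_subset_Icc_self

theorem measurableSet_II : MeasurableSet II := measurableSet_Ioo

theorem integral_split {g : ℝ × ℝ → ℝ} (hg : Continuous g) {R R' : ℝ} (hR : 0 ≤ R)
    (h : R ≤ R') :
    ∫ p in GamR R', g p = (∫ p in GamR R, g p) + (∫ p in Ico R R' ×ˢ II, g p)
      + ∫ p in II ×ˢ Ico R R', g p := by
  have i1 := integrableOn_rect hg (GamR_subset R)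
  have i2 := integrableOn_rect hg
    (prod_mono (Ico_subset_Icc_self : Ico R R' ⊆ Icc R R') II_subset)
  have i3 := integrableOn_rect hg
    (prod_mono II_subset (Ico_subset_Icc_self : Ico R R' ⊆ Icc R R'))
  rw [GamR_split hR h, setIntegral_union _ (measurableSet_II.prod measurableSet_Ico)
    (i1.union i2) i3, setIntegral_union _ (measurableSet_Ico.prod measurableSet_II) i1 i2]
  · refine Set.disjoint_left.2 fun p hp hq => ?_
    rw [mem_GamR] at hp
    exact absurd hq.1.1 (not_le.2 hp.2.2.1)
  · refine Set.disjoint_left.2 fun p hp hq => ?_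
    rcases hp with hp | hp
    · rw [mem_GamR] at hp
      exact absurd hq.2.1 (not_le.2 hp.2.2.2.1)
    · exact absurd hq.1.2 (not_lt.2 (hR.trans hp.1.1))

theorem continuous_gradSq2 {u : ℝ × ℝ → ℝ} (hu : ContDiff ℝ 1 u) : Continuous (gradSq2 u) :=
  ((continuous_partial hu _).pow 2).add ((continuous_partial hu _).pow 2)

/-! ### Estimates for admissible functions -/

section boundary
variable {R : ℝ} {u : ℝ × ℝ → ℝ}

theorem AdmR.zero_fst (hR : 0 < R) (hu : AdmR R u) {x : ℝ} (hx : x ∈ Ioo (-1) R) :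
    u (x, -1) = 0 := by
  refine hu.2 _ (mem_DirB.2 ⟨?_, ?_, ?_⟩)
  · have hs : Ioo (-1) R ×ˢ II ⊆ GamR R := fun p hp =>
      mem_GamR.2 ⟨hp.1.1, hp.2.1, hp.1.2, hp.2.2.trans hR, Or.inr hp.2.2⟩
    refine closure_mono hs ?_
    rw [closure_prod_eq, II, closure_Ioo (by norm_num : (-1 : ℝ) ≠ 0)]
    exact ⟨subset_closure hx, by simp⟩
  · simp only [Box, mem_ofPred_eq, abs_lt]
    refine ⟨⟨?_, ?_⟩, ?_, ?_⟩ <;> linarith [hx.1, hx.2]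
  · simp [Gam]

theorem AdmR.zero_snd (hR : 0 < R) (hu : AdmR R u) {y : ℝ} (hy : y ∈ Ioo (-1) R) :
    u (-1, y) = 0 := by
  refine hu.2 _ (mem_DirB.2 ⟨?_, ?_, ?_⟩)
  · have hs : II ×ˢ Ioo (-1) R ⊆ GamR R := fun p hp =>
      mem_GamR.2 ⟨hp.1.1, hp.2.1, hp.1.2.trans hR, hp.2.2, Or.inl hp.1.2⟩
    refine closure_mono hs ?_
    rw [closure_prod_eq, II, closure_Ioo (by norm_num : (-1 : ℝ) ≠ 0)]
    exact ⟨by simp, subset_closure hy⟩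
  · simp only [Box, mem_ofPred_eq, abs_lt]
    refine ⟨⟨?_, ?_⟩, ?_, ?_⟩ <;> linarith [hy.1, hy.2]
  · simp [Gam]

theorem AdmR.zero_fst' (hR : 0 < R) (hu : AdmR R u) {x : ℝ} (hx : x ∈ Ico 0 R) :
    u (x, 0) = 0 := by
  refine hu.2 _ (mem_DirB.2 ⟨?_, ?_, ?_⟩)
  · have hs : Ico 0 R ×ˢ II ⊆ GamR R := fun p hp =>
      mem_GamR.2 ⟨by linarith [hp.1.1], hp.2.1, hp.1.2, hp.2.2.trans hR, Or.inr hp.2.2⟩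
    refine closure_mono hs ?_
    rw [closure_prod_eq, II, closure_Ioo (by norm_num : (-1 : ℝ) ≠ 0)]
    exact ⟨subset_closure hx, by simp⟩
  · simp only [Box, mem_ofPred_eq, abs_lt]
    refine ⟨⟨?_, ?_⟩, ?_, ?_⟩ <;> linarith [hx.1, hx.2]
  · simp [Gam, hx.1]

theorem AdmR.zero_snd' (hR : 0 < R) (hu : AdmR R u) {y : ℝ} (hy : y ∈ Ico 0 R) :
    u (0, y) = 0 := by
  refine hu.2 _ (mem_DirB.2 ⟨?_, ?_, ?_⟩)
  · have hs : II ×ˢ Ico 0 R ⊆ GamR R := fun p hp =>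
      mem_GamR.2 ⟨hp.1.1, by linarith [hp.2.1], hp.1.2.trans hR, hp.2.2, Or.inl hp.1.2⟩
    refine closure_mono hs ?_
    rw [closure_prod_eq, II, closure_Ioo (by norm_num : (-1 : ℝ) ≠ 0)]
    exact ⟨by simp, subset_closure hy⟩
  · simp only [Box, mem_ofPred_eq, abs_lt]
    refine ⟨⟨?_, ?_⟩, ?_, ?_⟩ <;> linarith [hy.1, hy.2]
  · simp [Gam, hy.1]

theorem partial_fst_le (hu : ContDiff ℝ 1 u) {S : Set (ℝ × ℝ)} {a b c d : ℝ}
    (hS : S ⊆ Icc a b ×ˢ Icc c d) :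
    ∫ p in S, (fderiv ℝ u p (1, 0)) ^ 2 ≤ ∫ p in S, gradSq2 u p :=
  integral_mono (integrableOn_rect ((continuous_partial hu _).pow 2) hS)
    (integrableOn_rect (continuous_gradSq2 hu) hS) fun p => by
      simp only [gradSq2]; nlinarith [sq_nonneg (fderiv ℝ u p (0, 1))]

theorem partial_snd_le (hu : ContDiff ℝ 1 u) {S : Set (ℝ × ℝ)} {a b c d : ℝ}
    (hS : S ⊆ Icc a b ×ˢ Icc c d) :
    ∫ p in S, (fderiv ℝ u p (0, 1)) ^ 2 ≤ ∫ p in S, gradSq2 u p :=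
  integral_mono (integrableOn_rect ((continuous_partial hu _).pow 2) hS)
    (integrableOn_rect (continuous_gradSq2 hu) hS) fun p => by
      simp only [gradSq2]; nlinarith [sq_nonneg (fderiv ℝ u p (1, 0))]

/-- On a piece of an arm, the transverse derivative alone contributes at least `π²`. -/
theorem AdmR.arm_snd {r : ℝ} (hr : 0 ≤ r) (hR : 0 < R) (hu : AdmR R u) :
    π ^ 2 * ∫ p in Ico r R ×ˢ II, u p ^ 2 ≤ ∫ p in Ico r R ×ˢ II, gradSq2 u p := by
  refine le_trans ?_ (partial_snd_le hu.1 (prod_mono Ico_subset_Icc_self II_subset))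
  refine slice_snd (hu.1.continuous.pow 2) ((continuous_partial hu.1 _).pow 2)
    measurableSet_Ico Ico_subset_Icc_self II_subset fun x hx => ?_
  refine wirtinger_dirichlet (hasDerivAt_snd hu.1 x)
    ((continuous_partial hu.1 _).comp (by fun_prop)) (hu.zero_fst hR ⟨?_, hx.2⟩)
    (hu.zero_fst' hR ⟨hr.trans hx.1, hx.2⟩)
  linarith [hx.1]

theorem AdmR.arm_fst {r : ℝ} (hr : 0 ≤ r) (hR : 0 < R) (hu : AdmR R u) :
    π ^ 2 * ∫ p in II ×ˢ Ico r R, u p ^ 2 ≤ ∫ p in II ×ˢ Ico r R, gradSq2 u p := by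
  refine le_trans ?_ (partial_fst_le hu.1 (prod_mono II_subset Ico_subset_Icc_self))
  refine slice_fst (hu.1.continuous.pow 2) ((continuous_partial hu.1 _).pow 2)
    measurableSet_Ico II_subset Ico_subset_Icc_self fun y hy => ?_
  refine wirtinger_dirichlet (fun x => hasDerivAt_fst hu.1 x y)
    ((continuous_partial hu.1 _).comp (by fun_prop)) (hu.zero_snd hR ⟨?_, hy.2⟩)
    (hu.zero_snd' hR ⟨hr.trans hy.1, hy.2⟩)
  linarith [hy.1]

/-- On the corner square each of the two partial derivatives contributes `π²/4`. -/
theorem AdmR.square (hR : 0 < R) (hu : AdmR R u) :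
    π ^ 2 / 2 * ∫ p in II ×ˢ II, u p ^ 2 ≤ ∫ p in II ×ˢ II, gradSq2 u p := by
  have hsub := prod_mono II_subset II_subset
  have h1 : (π / 2) ^ 2 * ∫ p in II ×ˢ II, u p ^ 2
      ≤ ∫ p in II ×ˢ II, (fderiv ℝ u p (1, 0)) ^ 2 :=
    slice_fst (hu.1.continuous.pow 2) ((continuous_partial hu.1 _).pow 2)
      measurableSet_Ioo II_subset II_subset fun y hy =>
      wirtinger_mixed (fun x => hasDerivAt_fst hu.1 x y)
        ((continuous_partial hu.1 _).comp (by fun_prop)) (hu.zero_snd hR ⟨hy.1, hy.2.trans hR⟩)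
  have h2 : (π / 2) ^ 2 * ∫ p in II ×ˢ II, u p ^ 2
      ≤ ∫ p in II ×ˢ II, (fderiv ℝ u p (0, 1)) ^ 2 :=
    slice_snd (hu.1.continuous.pow 2) ((continuous_partial hu.1 _).pow 2)
      measurableSet_Ioo II_subset II_subset fun x hx =>
      wirtinger_mixed (hasDerivAt_snd hu.1 x)
        ((continuous_partial hu.1 _).comp (by fun_prop)) (hu.zero_fst hR ⟨hx.1, hx.2.trans hR⟩)
  have h3 : ∫ p in II ×ˢ II, gradSq2 u p = (∫ p in II ×ˢ II, (fderiv ℝ u p (1, 0)) ^ 2)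
      + ∫ p in II ×ˢ II, (fderiv ℝ u p (0, 1)) ^ 2 :=
    integral_add (integrableOn_rect ((continuous_partial hu.1 _).pow 2) hsub)
      (integrableOn_rect ((continuous_partial hu.1 _).pow 2) hsub)
  rw [h3]
  linarith

theorem integral_sq_nonneg' (u : ℝ × ℝ → ℝ) (S : Set (ℝ × ℝ)) : 0 ≤ ∫ p in S, u p ^ 2 :=
  integral_nonneg fun _ => sq_nonneg _

theorem integral_gradSq2_nonneg (u : ℝ × ℝ → ℝ) (S : Set (ℝ × ℝ)) :
    0 ≤ ∫ p in S, gradSq2 u p :=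
  integral_nonneg fun _ => add_nonneg (sq_nonneg _) (sq_nonneg _)

theorem AdmR.half_pi_sq_le (hR : 0 < R) (hu : AdmR R u) :
    π ^ 2 / 2 * ∫ p in GamR R, u p ^ 2 ≤ ∫ p in GamR R, gradSq2 u p := by
  rw [integral_split (g := fun p => u p ^ 2) (hu.1.continuous.pow 2) le_rfl hR.le,
    integral_split (continuous_gradSq2 hu.1) le_rfl hR.le, GamR_zero]
  have h1 := hu.square hR
  have h2 := hu.arm_fst le_rfl hR
  have h3 := hu.arm_snd le_rfl hR
  have h4 := integral_sq_nonneg' u (II ×ˢ Ico 0 R)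
  have h5 := integral_sq_nonneg' u (Ico 0 R ×ˢ II)
  nlinarith [sq_nonneg π, mul_nonneg (sq_nonneg π) h4, mul_nonneg (sq_nonneg π) h5]

/-- This holds also when `u` vanishes on `Γ_R`, in which case the Rayleigh quotient is not
admitted in the definition of `lamR`. -/
theorem lamR_mul_le (hu : AdmR R u) :
    lamR R * ∫ p in GamR R, u p ^ 2 ≤ ∫ p in GamR R, gradSq2 u p := by
  rcases (integral_sq_nonneg' u (GamR R)).eq_or_lt with h | h
  · rw [← h, mul_zero]; exact integral_gradSq2_nonneg _ _
  · rw [← le_div_iff₀ h]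
    refine csInf_le ⟨0, ?_⟩ ⟨u, hu, h.ne', rfl⟩
    rintro _ ⟨v, -, -, rfl⟩
    exact div_nonneg (integral_gradSq2_nonneg _ _) (integral_sq_nonneg' _ _)

/-- The first hypothesis excludes the junk value `sInf ∅ = 0`. -/
theorem le_lamR {c : ℝ} (hne : ∃ u, AdmR R u ∧ (∫ p in GamR R, u p ^ 2) ≠ 0)
    (h : ∀ u, AdmR R u → c * ∫ p in GamR R, u p ^ 2 ≤ ∫ p in GamR R, gradSq2 u p) :
    c ≤ lamR R := by
  obtain ⟨u, hu, hu0⟩ := hne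
  refine le_csInf ⟨_, u, hu, hu0, rfl⟩ ?_
  rintro _ ⟨v, hv, hv0, rfl⟩
  rw [le_div_iff₀ ((integral_sq_nonneg' _ _).lt_of_ne' hv0)]
  exact h v hv

/-- Restricting `u` from `Γ_R'` to `Γ_R` removes rectangles on which the quotient is at least `π²`,
so it does not increase the quotient as long as `lamR R ≤ π²`. -/
theorem lamR_mono_of_le {R' : ℝ} (hR : 0 < R) (h : R ≤ R') (hl : lamR R ≤ π ^ 2)
    (hne : ∃ u, AdmR R' u ∧ (∫ p in GamR R', u p ^ 2) ≠ 0) : lamR R ≤ lamR R' := by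
  refine le_lamR hne fun u hu => ?_
  rw [integral_split (g := fun p => u p ^ 2) (hu.1.continuous.pow 2) hR.le h,
    integral_split (continuous_gradSq2 hu.1) hR.le h]
  -- The Dirichlet boundary grows with `R`, so `u` stays admissible on `Γ_R`.
  have h1 := lamR_mul_le (R := R) ⟨hu.1, fun p hp => hu.2 p (DirB_mono h hp)⟩
  have h2 := hu.arm_fst hR.le (hR.trans_le h)
  have h3 := hu.arm_snd hR.le (hR.trans_le h)
  have h4 := mul_le_mul_of_nonneg_right hl (integral_sq_nonneg' u (II ×ˢ Ico R R'))
  have h5 := mul_le_mul_of_nonneg_right hl (integral_sq_nonneg' u (Ico R R' ×ˢ II))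
  linarith

end boundary

/-! ### A trial function with quotient below `π²` -/

/-- The one-variable profile `t (1 - t) (1 - t³)`, `t = 1 + x`, for `x ≤ 0`, expanded in powers of
`x` and extended by zero. The double zero at `x = 0` makes the extension `C¹`. -/
def profile (x : ℝ) : ℝ := if x ≤ 0 then 3 * x ^ 2 + 6 * x ^ 3 + 4 * x ^ 4 + x ^ 5 else 0

/-- The derivative of `profile`. -/
def profile' (x : ℝ) : ℝ := if x ≤ 0 then 6 * x + 18 * x ^ 2 + 16 * x ^ 3 + 5 * x ^ 4 else 0

theorem profile_of_nonpos {x : ℝ} (hx : x ≤ 0) :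
    profile x = 3 * x ^ 2 + 6 * x ^ 3 + 4 * x ^ 4 + x ^ 5 := if_pos hx

theorem profile'_of_nonpos {x : ℝ} (hx : x ≤ 0) :
    profile' x = 6 * x + 18 * x ^ 2 + 16 * x ^ 3 + 5 * x ^ 4 := if_pos hx

theorem profile_of_nonneg {x : ℝ} (hx : 0 ≤ x) : profile x = 0 := by
  rcases hx.eq_or_lt with rfl | h
  · simp [profile]
  · exact if_neg (not_le.2 h)

theorem profile'_of_nonneg {x : ℝ} (hx : 0 ≤ x) : profile' x = 0 := by
  rcases hx.eq_or_lt with rfl | h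
  · simp [profile']
  · exact if_neg (not_le.2 h)

theorem continuous_profile' : Continuous profile' :=
  Continuous.if_le (by fun_prop) continuous_const continuous_id continuous_const
    (fun x hx => by simp [hx])

theorem hasDerivAt_profile (x : ℝ) : HasDerivAt profile (profile' x) x := by
  have hpoly : HasDerivAt (fun x : ℝ => 3 * x ^ 2 + 6 * x ^ 3 + 4 * x ^ 4 + x ^ 5)
      (6 * x + 18 * x ^ 2 + 16 * x ^ 3 + 5 * x ^ 4) x := by
    refine (((((hasDerivAt_pow 2 x).const_mul 3).add ((hasDerivAt_pow 3 x).const_mul 6)).add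
      ((hasDerivAt_pow 4 x).const_mul 4)).add (hasDerivAt_pow 5 x)).congr_deriv ?_
    norm_num
    ring
  rcases lt_trichotomy x 0 with h | rfl | h
  · rw [profile'_of_nonpos h.le]
    refine hpoly.congr_of_eventuallyEq ?_
    filter_upwards [Iio_mem_nhds h] with y hy using profile_of_nonpos (le_of_lt hy)
  · have h1 : HasDerivWithinAt profile (profile' 0) (Iic 0) 0 := by
      rw [profile'_of_nonpos le_rfl]
      exact hpoly.hasDerivWithinAt.congr (fun y hy => profile_of_nonpos hy)
        (profile_of_nonpos le_rfl)
    have h2 : HasDerivWithinAt profile (profile' 0) (Ici 0) 0 := by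
      rw [profile'_of_nonneg le_rfl]
      exact (hasDerivWithinAt_const (0 : ℝ) (Ici 0) (0 : ℝ)).congr
        (fun y hy => profile_of_nonneg hy) (profile_of_nonneg le_rfl)
    simpa [Iic_union_Ici] using h1.union h2
  · rw [profile'_of_nonneg h.le]
    refine (hasDerivAt_const x (0 : ℝ)).congr_of_eventuallyEq ?_
    filter_upwards [Ioi_mem_nhds h] with y hy using profile_of_nonneg (le_of_lt hy)

theorem contDiff_profile : ContDiff ℝ 1 profile := by
  rw [contDiff_one_iff_deriv]
  refine ⟨fun x => (hasDerivAt_profile x).differentiableAt, ?_⟩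
  rw [show deriv profile = profile' from funext fun x => (hasDerivAt_profile x).deriv]
  exact continuous_profile'

/-- The trial function `F(x₁)(1 + x₂) + (1 + x₁)F(x₂)`, where `F` is `profile`. It vanishes on the
lines `x₁ = -1` and `x₂ = -1`, because `F(-1) = 0`, and on the closed first quadrant, so it is
admissible on every `Γ_R`. -/
def trial (p : ℝ × ℝ) : ℝ := profile p.1 * (1 + p.2) + (1 + p.1) * profile p.2

theorem contDiff_trial : ContDiff ℝ 1 trial := by
  have := contDiff_profile
  unfold trial
  fun_prop

theorem gradSq2_trial (p : ℝ × ℝ) :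
    gradSq2 trial p = (profile' p.1 * (1 + p.2) + 1 * profile p.2) ^ 2
      + (profile p.1 * 1 + (1 + p.1) * profile' p.2) ^ 2 := by
  obtain ⟨x, y⟩ := p
  have h1 : HasDerivAt (fun x => trial (x, y)) (profile' x * (1 + y) + 1 * profile y) x :=
    ((hasDerivAt_profile x).mul_const (1 + y)).add
      (((hasDerivAt_id x).const_add 1).mul_const (profile y))
  have h2 : HasDerivAt (fun y => trial (x, y)) (profile x * 1 + (1 + x) * profile' y) y :=
    (((hasDerivAt_id y).const_add 1).const_mul (profile x)).add
      ((hasDerivAt_profile y).const_mul (1 + x))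
  rw [gradSq2, (hasDerivAt_fst contDiff_trial x y).unique h1,
    (hasDerivAt_snd contDiff_trial x y).unique h2]

theorem admR_trial (R : ℝ) : AdmR R trial := by
  refine ⟨contDiff_trial, fun p hp => ?_⟩
  obtain ⟨hcl, -, hG⟩ := mem_DirB.1 hp
  have hcont : Continuous fun p : ℝ × ℝ => min p.1 p.2 := by fun_prop
  have hmin : min p.1 p.2 ∈ Icc (-1 : ℝ) 0 :=
    closure_minimal (t := (fun p : ℝ × ℝ => min p.1 p.2) ⁻¹' Icc (-1) 0)
      (fun q hq => ⟨hq.1.1.le, hq.1.2.le⟩) (isClosed_Icc.preimage hcont) hcl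
  have hprof : profile (-1) = 0 := by rw [profile_of_nonpos] <;> norm_num
  rcases hmin.1.eq_or_lt with h | h
  · rcases min_choice p.1 p.2 with h' | h' <;> rw [h'] at h <;> simp [trial, ← h, hprof]
  · have h0 : (0 : ℝ) ≤ min p.1 p.2 := not_lt.1 fun h' => hG ⟨h, h'⟩
    simp [trial, profile_of_nonneg (le_min_iff.1 h0).1, profile_of_nonneg (le_min_iff.1 h0).2]

theorem integral_square_sep {a b c d : ℝ → ℝ} (ha : Continuous a) (hb : Continuous b)
    (hc : Continuous c) (hd : Continuous d) :
    ∫ p in II ×ˢ II, (a p.1 * b p.2 + c p.1 * d p.2) ^ 2 =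
      (∫ x in II, a x ^ 2) * (∫ x in II, b x ^ 2)
      + 2 * ((∫ x in II, a x * c x) * ∫ x in II, b x * d x)
      + (∫ x in II, c x ^ 2) * (∫ x in II, d x ^ 2) := by
  have hsub := prod_mono II_subset II_subset
  simp only [← setIntegral_prod_mul, ← Measure.volume_eq_prod]
  rw [← integral_const_mul, ← integral_add, ← integral_add]
  · refine integral_congr_ae (Filter.Eventually.of_forall fun p => ?_)
    simp only
    ring
  all_goals exact integrableOn_rect (by fun_prop) hsub

theorem integral_II {g h : ℝ → ℝ} (hgh : ∀ x ≤ 0, g x = h x) :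
    ∫ x in II, g x = ∫ x in (-1)..0, h x := by
  rw [intervalIntegral.integral_of_le (by norm_num), integral_Ioc_eq_integral_Ioo]
  exact setIntegral_congr_fun measurableSet_Ioo fun x hx => hgh x hx.2.le

theorem integral_profile_sq : ∫ x in II, profile x ^ 2 = 65 / 2772 := by
  rw [integral_II (h := fun x => 9 * x ^ 4 + 36 * x ^ 5 + 60 * x ^ 6 + 54 * x ^ 7 + 28 * x ^ 8
    + 8 * x ^ 9 + x ^ 10) fun x hx => by rw [profile_of_nonpos hx]; ring]
  repeat rw [intervalIntegral.integral_add]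
  all_goals try exact Continuous.intervalIntegrable (by fun_prop) _ _
  norm_num [integral_pow]

theorem integral_profile'_sq : ∫ x in II, profile' x ^ 2 = 83 / 315 := by
  rw [integral_II (h := fun x => 36 * x ^ 2 + 216 * x ^ 3 + 516 * x ^ 4 + 636 * x ^ 5
    + 436 * x ^ 6 + 160 * x ^ 7 + 25 * x ^ 8) fun x hx => by rw [profile'_of_nonpos hx]; ring]
  repeat rw [intervalIntegral.integral_add]
  all_goals try exact Continuous.intervalIntegrable (by fun_prop) _ _
  norm_num [integral_pow]

theorem integral_profile_mul : ∫ x in II, profile x * (1 + x) = 5 / 84 := by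
  rw [integral_II (h := fun x => 3 * x ^ 2 + 9 * x ^ 3 + 10 * x ^ 4 + 5 * x ^ 5 + x ^ 6)
    fun x hx => by rw [profile_of_nonpos hx]; ring]
  repeat rw [intervalIntegral.integral_add]
  all_goals try exact Continuous.intervalIntegrable (by fun_prop) _ _
  norm_num [integral_pow]

theorem integral_profile' : ∫ x in II, profile' x = 0 := by
  rw [integral_II (h := fun x => 6 * x + 18 * x ^ 2 + 16 * x ^ 3 + 5 * x ^ 4)
    fun x hx => by rw [profile'_of_nonpos hx]]
  repeat rw [intervalIntegral.integral_add]
  all_goals try exact Continuous.intervalIntegrable (by fun_prop) _ _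
  rw [intervalIntegral.integral_const_mul]
  norm_num [integral_pow]

theorem integral_one_add_sq : ∫ x in II, (1 + x) ^ 2 = 1 / 3 := by
  rw [integral_II (h := fun x => 1 + 2 * x + x ^ 2) fun x hx => by ring]
  repeat rw [intervalIntegral.integral_add]
  all_goals try exact Continuous.intervalIntegrable (by fun_prop) _ _
  rw [intervalIntegral.integral_const_mul]
  norm_num [integral_pow]

theorem integral_II_one : ∫ _x in II, (1 : ℝ) ^ 2 = 1 := by simp [II]

/-- On the corner square the quotient of the trial function is about `9.796`, just below
`π² ≈ 9.870`. -/
theorem trial_square_lt :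
    ∫ p in II ×ˢ II, gradSq2 trial p < π ^ 2 * ∫ p in II ×ˢ II, trial p ^ 2 := by
  have hsub := prod_mono II_subset II_subset
  have hp : Continuous profile := contDiff_profile.continuous
  have hp' := continuous_profile'
  have hN := integral_square_sep (a := profile) (b := fun y => 1 + y) (c := fun x => 1 + x)
    (d := profile) hp (by fun_prop) (by fun_prop) hp
  have hE1 := integral_square_sep (a := profile') (b := fun y => 1 + y) (c := fun _ => 1)
    (d := profile) hp' (by fun_prop) (by fun_prop) hp
  have hE2 := integral_square_sep (a := profile) (b := fun _ => 1) (c := fun x => 1 + x)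
    (d := profile') hp (by fun_prop) (by fun_prop) hp'
  simp only [mul_comm (1 + _) (profile _), mul_comm (1 : ℝ) (profile' _), integral_profile_sq,
    integral_profile'_sq, integral_profile_mul, integral_profile', integral_one_add_sq,
    integral_II_one, mul_one, one_mul, zero_mul, mul_zero, add_zero] at hN hE1 hE2
  simp only [gradSq2_trial, trial]
  rw [integral_add (integrableOn_rect (by fun_prop) hsub) (integrableOn_rect (by fun_prop) hsub)]
  simp only [mul_comm (1 + _) (profile _), mul_one, one_mul]
  rw [hN, hE1, hE2]
  nlinarith [pi_gt_d2]

theorem trial_ne {R : ℝ} (hR : 0 ≤ R) :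
    0 < ∫ p in II ×ˢ II, trial p ^ 2 ∧
    ∫ p in II ×ˢ II, trial p ^ 2 ≤ ∫ p in GamR R, trial p ^ 2 := by
  constructor
  · have h1 := trial_square_lt
    have h2 := integral_gradSq2_nonneg trial (II ×ˢ II)
    exact pos_of_mul_pos_right (h2.trans_lt h1) (sq_nonneg π)
  · rw [integral_split (g := fun p => trial p ^ 2) (contDiff_trial.continuous.pow 2) le_rfl hR,
      GamR_zero]
    have h1 := integral_sq_nonneg' trial (Ico 0 R ×ˢ II)
    have h2 := integral_sq_nonneg' trial (II ×ˢ Ico 0 R)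
    linarith

theorem exists_admR {R : ℝ} (hR : 0 < R) :
    ∃ u, AdmR R u ∧ (∫ p in GamR R, u p ^ 2) ≠ 0 :=
  ⟨trial, admR_trial R, ((trial_ne hR.le).1.trans_le (trial_ne hR.le).2).ne'⟩

/-- For small `R` the arms add an energy of order `R` to that of the square, which the strict
inequality `trial_square_lt` absorbs. -/
theorem lamR_le_pi_sq_of_small : ∃ δ > 0, ∀ R ∈ Ioo 0 δ, lamR R ≤ π ^ 2 := by
  obtain ⟨C, hC⟩ := (isCompact_Icc.prod isCompact_Icc :
    IsCompact (Icc (-1 : ℝ) 1 ×ˢ Icc (-1 : ℝ) 1)).exists_bound_of_continuousOn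
      (continuous_gradSq2 contDiff_trial).continuousOn
  have hC0 : 0 ≤ C := (norm_nonneg _).trans (hC (0, 0) (by simp))
  have hgap := sub_pos.2 trial_square_lt
  set gap := π ^ 2 * (∫ p in II ×ˢ II, trial p ^ 2) - ∫ p in II ×ˢ II, gradSq2 trial p with hg
  refine ⟨min 1 (gap / (2 * C + 1)), by positivity, fun R hR => ?_⟩
  have hR1 : R < 1 := hR.2.trans_le (min_le_left _ _)
  have hR2 : R * (2 * C + 1) < gap :=
    (lt_div_iff₀ (by positivity)).1 (hR.2.trans_le (min_le_right _ _))
  have hIR : Ico 0 R ⊆ Icc (-1 : ℝ) 1 := fun x hx => ⟨by linarith [hx.1], by linarith [hx.2]⟩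
  have hII : II ⊆ Icc (-1 : ℝ) 1 := fun x hx => ⟨hx.1.le, by linarith [hx.2]⟩
  have v1 : volume.real (Ico 0 R ×ˢ II) = R := by
    rw [Measure.volume_eq_prod, measureReal_prod_prod]; simp [II, hR.1.le]
  have v2 : volume.real (II ×ˢ Ico 0 R) = R := by
    rw [Measure.volume_eq_prod, measureReal_prod_prod]; simp [II, hR.1.le]
  have hfin : ∀ S ⊆ Icc (-1 : ℝ) 1 ×ˢ Icc (-1 : ℝ) 1, volume S < ⊤ := fun S hS =>
    (measure_mono hS).trans_lt (isCompact_Icc.prod isCompact_Icc).measure_lt_top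
  have hs1 := prod_mono hIR hII
  have hs2 := prod_mono hII hIR
  have e1 := (le_abs_self _).trans
    (norm_setIntegral_le_of_norm_le_const (hfin _ hs1) fun p hp => hC p (hs1 hp))
  have e2 := (le_abs_self _).trans
    (norm_setIntegral_le_of_norm_le_const (hfin _ hs2) fun p hp => hC p (hs2 hp))
  rw [v1] at e1
  rw [v2] at e2
  have hE := integral_split (continuous_gradSq2 contDiff_trial) le_rfl hR.1.le
  rw [GamR_zero] at hE
  obtain ⟨hN0, hN⟩ := trial_ne hR.1.le
  have hl := lamR_mul_le (admR_trial R)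
  refine le_of_mul_le_mul_right (hl.trans ?_) (hN0.trans_le hN)
  have := mul_le_mul_of_nonneg_left hN (sq_nonneg π)
  nlinarith [hR.1]

/-- Lemma 3.6 iii: for every `R > 0`, `λ₁(Γ_R) ≥ π²/2`;
consequently the right limit `λ(0₊) = lim_{R→0⁺} λ₁(Γ_R)` exists and is `≥ π²/2`. -/
theorem lamR_ge_half_pi_sq :
    (∀ R : ℝ, 0 < R → π ^ 2 / 2 ≤ lamR R) ∧
    ∃ l : ℝ, Filter.Tendsto lamR (nhdsWithin 0 (Set.Ioi 0)) (nhds l) ∧ π ^ 2 / 2 ≤ l := by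
  have hlow : ∀ R : ℝ, 0 < R → π ^ 2 / 2 ≤ lamR R := fun R hR =>
    le_lamR (exists_admR hR) fun u hu => hu.half_pi_sq_le hR
  refine ⟨hlow, ?_⟩
  obtain ⟨δ, hδ, hsmall⟩ := lamR_le_pi_sq_of_small
  have hmono : MonotoneOn lamR (Ioo 0 δ) := fun R hR R' hR' h =>
    lamR_mono_of_le hR.1 h (hsmall R hR) (exists_admR hR'.1)
  have hlim := hmono.tendsto_nhdsWithin_Ioo_right (nonempty_Ioo.2 hδ)
    ⟨π ^ 2 / 2, by rintro _ ⟨R, hR, rfl⟩; exact hlow R hR.1⟩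
  exact ⟨_, hlim, ge_of_tendsto hlim (Filter.eventually_of_mem self_mem_nhdsWithin hlow)⟩
end
end
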